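/- arXiv:2012.12623 — 2 statements merged into one kernel-verified Lean document; each statement's English description precedes it below -/
import Mathlib

section
/- Let n ≥ 1 and suppose the Kasteleyn matrix K_n, regarded as a matrix over ℚ, is invertible. Then for all integers 0 ≤ i < j ≤ n−1, the ((2i,2n+1),(2j,2n+1)) entry of K_n⁻¹ equals Z_n^{{(2i,2n+1),(2j,2n+1)}}/Z_n; in particular it is nonnegative. -/
open Finset

/-- Membership predicate for the vertex set `V_n` of the TSSCPP graph `G_n`:
`0 ≤ x₁ ≤ 2n`, `x₁ ≤ x₂ ≤ 2n+1`, with `(2n,2n+1)` removed when `n` is odd. -/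
def memV (n : ℕ) (x : ℤ × ℤ) : Prop :=
  0 ≤ x.1 ∧ x.1 ≤ 2*(n:ℤ) ∧ x.1 ≤ x.2 ∧ x.2 ≤ 2*(n:ℤ)+1 ∧
    ¬(n % 2 = 1 ∧ x.1 = 2*(n:ℤ) ∧ x.2 = 2*(n:ℤ)+1)

instance memV.decPred (n : ℕ) : DecidablePred (memV n) := fun x => by
  unfold memV; infer_instance

/-- The vertex set `V_n` as a finite set. -/
noncomputable def Vfin (n : ℕ) : Finset (ℤ × ℤ) :=
  (Finset.Icc (0:ℤ) (2*(n:ℤ)) ×ˢ Finset.Icc (0:ℤ) (2*(n:ℤ)+1)).filter (memV n)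

/-- The vertex set `V_n` as a set. -/
def Vset (n : ℕ) : Set (ℤ × ℤ) := {x | memV n x}

/-- The distinguished vertex `b_n = (2n, 2n+1-(n mod 2))`. -/
def bvertex (n : ℕ) : ℤ × ℤ := (2*(n:ℤ), 2*(n:ℤ)+1 - ((n % 2 : ℕ) : ℤ))

/-- Edge relation (with `x` the "lower-left" endpoint) of the TSSCPP graph `G_n`:
horizontal edges `((x₁,x₂),(x₁+1,x₂))` for `0 ≤ x₁ ≤ 2n−1`, `x₁ ≤ x₂ ≤ 2n+1`, `x₁+x₂` odd;
vertical edges `((x₁,x₂),(x₁,x₂+1))` for `0 ≤ x₁ ≤ 2n` (`2n−1` when `n` odd), `x₁ ≤ x₂ ≤ 2n`;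
diagonal edges `((x₁,x₁),(x₁+1,x₁+1))` for `0 ≤ x₁ ≤ 2n−1`. -/
def edgeRel (n : ℕ) (x y : ℤ × ℤ) : Prop :=
  (y.1 = x.1 + 1 ∧ y.2 = x.2 ∧ 0 ≤ x.1 ∧ x.1 ≤ 2*(n:ℤ) - 1 ∧ x.1 ≤ x.2 ∧
      x.2 ≤ 2*(n:ℤ)+1 ∧ Odd (x.1 + x.2)) ∨
  (y.1 = x.1 ∧ y.2 = x.2 + 1 ∧ 0 ≤ x.1 ∧ x.1 ≤ 2*(n:ℤ) - ((n % 2 : ℕ) : ℤ) ∧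
      x.1 ≤ x.2 ∧ x.2 ≤ 2*(n:ℤ)) ∨
  (x.1 = x.2 ∧ y.1 = x.1 + 1 ∧ y.2 = x.2 + 1 ∧ 0 ≤ x.1 ∧ x.1 ≤ 2*(n:ℤ) - 1)

/-- The TSSCPP graph `G_n` (as a graph on all of `ℤ × ℤ`; all of its edges join
vertices of `V_n`). -/
def Gph (n : ℕ) : SimpleGraph (ℤ × ℤ) where
  Adj x y := edgeRel n x y ∨ edgeRel n y x
  symm := ⟨fun x y h => Or.symm h⟩
  loopless := by
    constructor
    rintro ⟨x1, x2⟩ (h | h) <;>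
      rcases h with ⟨h1, h2, -⟩ | ⟨h1, h2, -⟩ | ⟨h0, h1, h2, -⟩ <;> omega

/-- `Zpm n U` = number of perfect matchings of the subgraph of `G_n` induced on `V_n \ U`. -/
noncomputable def Zpm (n : ℕ) (U : Set (ℤ × ℤ)) : ℕ :=
  Nat.card {M : ((Gph n).induce (Vset n \ U)).Subgraph // M.IsPerfectMatching}

/-- The entry function `k(x,y)` of the Kasteleyn matrix. -/
def kfun (x y : ℤ × ℤ) : ℚ :=
  if ((x.1 + x.2) % 2 = 0 ∧ x.2 = y.2 ∧ x.1 - y.1 = 1) ∨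
     ((x.1 + x.2) % 2 = 0 ∧ x.1 = y.1 ∧ (y.2 - x.2 = 1 ∨ x.2 - y.2 = 1)) ∨
     (x.1 = x.2 ∧ y.1 = y.2 ∧ y.1 = x.1 - 1)
  then 1 else 0

/-- The Kasteleyn matrix `K_n` of `G_n` over `ℚ`, rows and columns indexed by `V_n`. -/
def Kmat (n : ℕ) : Matrix ↥(Vfin n) ↥(Vfin n) ℚ :=
  fun x y => kfun x.val y.val - kfun y.val x.val

/-! ### Pfaffians through the exterior algebra -/

section Pfaffian

open CliffordAlgebra

variable {α β : Type*} [LinearOrder β]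

/-- The bilinear form on `α →₀ ℚ` with Gram matrix `-A` in the standard basis. -/
noncomputable def pfForm (A : α → α → ℚ) : LinearMap.BilinForm ℚ (α →₀ ℚ) :=
  Finsupp.linearCombination ℚ fun a => Finsupp.linearCombination ℚ fun b => -A a b

lemma pfForm_single (A : α → α → ℚ) (a b : α) :
    pfForm A (Finsupp.single a 1) (Finsupp.single b 1) = -A a b := by
  simp [pfForm]

lemma pfForm_toQuadraticMap {A : α → α → ℚ} (hA : ∀ a b, A a b = -A b a) :
    (pfForm A).toQuadraticMap = (0 : QuadraticForm ℚ (α →₀ ℚ)) - 0 := by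
  have hflip : (pfForm A).flip = -pfForm A := by
    ext a b
    simp [pfForm, ← hA b a]
  ext m
  have h : pfForm A m m = -pfForm A m m := by
    simpa using LinearMap.congr_fun (LinearMap.congr_fun hflip m) m
  simp only [LinearMap.BilinMap.toQuadraticMap_apply, sub_self, zero_apply]
  linarith

/-- The linear functional on the exterior algebra whose value on a monomial is the Pfaffian of the
corresponding submatrix of the antisymmetric matrix `A`. -/
noncomputable def pfFunctional {A : α → α → ℚ} (hA : ∀ a b, A a b = -A b a) :
    ExteriorAlgebra ℚ (α →₀ ℚ) →ₗ[ℚ] ℚ :=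
  ExteriorAlgebra.algebraMapInv.toLinearMap ∘ₗ changeForm (pfForm_toQuadraticMap hA)

lemma pfFunctional_ι_mul {A : α → α → ℚ} (hA : ∀ a b, A a b = -A b a) (m : α →₀ ℚ)
    (x : ExteriorAlgebra ℚ (α →₀ ℚ)) :
    pfFunctional hA (ExteriorAlgebra.ι ℚ m * x) =
      -pfFunctional hA (contractLeft (pfForm A m) x) := by
  have h0 : ExteriorAlgebra.algebraMapInv (R := ℚ) (ExteriorAlgebra.ι ℚ m) = 0 := by
    simp [ExteriorAlgebra.algebraMapInv]
  have h1 := changeForm_ι_mul (pfForm_toQuadraticMap hA) m x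
  have h2 := changeForm_contractLeft (pfForm_toQuadraticMap hA) (pfForm A m) x
  calc ExteriorAlgebra.algebraMapInv (changeForm (pfForm_toQuadraticMap hA) _)
      = ExteriorAlgebra.algebraMapInv (R := ℚ) (ExteriorAlgebra.ι ℚ m *
          changeForm (pfForm_toQuadraticMap hA) x -
          changeForm (pfForm_toQuadraticMap hA) (contractLeft (pfForm A m) x)) := by
        rw [h2]; exact congrArg _ h1
    _ = _ := by
        rw [map_sub, map_mul, h0, zero_mul, zero_sub]; rfl

instance (key : α ↪ β) : IsTrans α fun x y => key x ≤ key y := ⟨fun _ _ _ => le_trans⟩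

instance (key : α ↪ β) : Std.Antisymm fun x y => key x ≤ key y :=
  ⟨fun _ _ h h' => key.injective (le_antisymm h h')⟩

instance (key : α ↪ β) : Std.Total fun x y => key x ≤ key y := ⟨fun _ _ => le_total _ _⟩

/-- The product in the exterior algebra of the basis vectors indexed by `S`, in the order
given by `key`. -/
noncomputable def extMonomial (key : α ↪ β) (S : Finset α) : ExteriorAlgebra ℚ (α →₀ ℚ) :=
  ((S.sort fun x y => key x ≤ key y).map fun a =>
    ExteriorAlgebra.ι ℚ (Finsupp.single a (1 : ℚ))).prod

/-- The number of elements of `S` preceding `b` in the order given by `key`. -/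
def rankIn (key : α ↪ β) (S : Finset α) (b : α) : ℕ :=
  #{s ∈ S | key s < key b}

lemma rankIn_of_forall_le (key : α ↪ β) {b : α} {S : Finset α}
    (h : ∀ s ∈ S, key b ≤ key s) : rankIn key S b = 0 := by
  simpa [rankIn, filter_eq_empty_iff] using h

/-- The Pfaffian of the restriction of the antisymmetric matrix `A` to `S`, ordered by `key`. -/
noncomputable def pfaffian (key : α ↪ β) {A : α → α → ℚ} (hA : ∀ a b, A a b = -A b a)
    (S : Finset α) : ℚ :=
  pfFunctional hA (extMonomial key S)

lemma pfaffian_empty (key : α ↪ β) {A : α → α → ℚ} (hA : ∀ a b, A a b = -A b a) :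
    pfaffian key hA ∅ = 1 := by
  simp only [pfaffian, extMonomial, sort_empty, List.map_nil, List.prod_nil]
  exact (congrArg _ (changeForm_one (pfForm_toQuadraticMap hA))).trans (map_one ExteriorAlgebra.algebraMapInv)

variable [DecidableEq α]

lemma extMonomial_insert (key : α ↪ β) {a : α} {S : Finset α} (ha : a ∉ S)
    (hmin : ∀ s ∈ S, key a ≤ key s) :
    extMonomial key (insert a S) =
      ExteriorAlgebra.ι ℚ (Finsupp.single a 1) * extMonomial key S := by
  simp [extMonomial, Finset.sort_insert (fun x y => key x ≤ key y) hmin ha]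

lemma rankIn_insert_of_lt (key : α ↪ β) {a b : α} {S : Finset α} (ha : a ∉ S)
    (hab : key a < key b) : rankIn key (insert a S) b = rankIn key S b + 1 := by
  simp [rankIn, filter_insert, hab, ha]

lemma ι_mul_extMonomial_of_mem (key : α ↪ β) (x : α) (S : Finset α) (hx : x ∈ S) :
    ExteriorAlgebra.ι ℚ (Finsupp.single x (1 : ℚ)) * extMonomial key S = 0 := by
  induction S using Finset.induction_on_min_value key with
  | empty => simp at hx
  | insert a S ha hmin ih =>
    rw [extMonomial_insert key ha hmin, ← mul_assoc]
    by_cases hxa : x = a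
    · rw [hxa, ExteriorAlgebra.ι_sq_zero, zero_mul]
    · have hxS : x ∈ S := by simpa [hxa] using hx
      rw [eq_neg_of_add_eq_zero_left (ExteriorAlgebra.ι_add_mul_swap (R := ℚ) _ _), neg_mul,
        mul_assoc, ih hxS, mul_zero, neg_zero]

lemma ι_mul_extMonomial_of_notMem (key : α ↪ β) (x : α) (S : Finset α) (hx : x ∉ S) :
    ExteriorAlgebra.ι ℚ (Finsupp.single x (1 : ℚ)) * extMonomial key S =
      (-1 : ℚ) ^ rankIn key S x • extMonomial key (insert x S) := by
  induction S using Finset.induction_on_min_value key with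
  | empty => rw [extMonomial_insert key hx (by simp)]; simp [rankIn]
  | insert a S ha hmin ih =>
    simp only [mem_insert, not_or] at hx
    rcases lt_or_gt_of_ne (fun h => hx.1 (key.injective h)) with hlt | hgt
    · have hmin' : ∀ s ∈ insert a S, key x ≤ key s := by
        intro s hs
        rcases mem_insert.1 hs with rfl | hs
        · exact hlt.le
        · exact hlt.le.trans (hmin s hs)
      rw [extMonomial_insert key (by simpa using hx) hmin', rankIn_of_forall_le key hmin']
      simp
    · have hmin' : ∀ s ∈ insert x S, key a ≤ key s := by
        intro s hs
        rcases mem_insert.1 hs with rfl | hs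
        · exact hgt.le
        · exact hmin s hs
      rw [Finset.insert_comm, extMonomial_insert key (by simp [ha, Ne.symm hx.1]) hmin',
        extMonomial_insert key ha hmin, rankIn_insert_of_lt key ha hgt, ← mul_assoc,
        eq_neg_of_add_eq_zero_left (ExteriorAlgebra.ι_add_mul_swap (R := ℚ) _ _), neg_mul,
        mul_assoc, ih hx.2, pow_succ]
      simp

lemma contractLeft_extMonomial (key : α ↪ β) (d : Module.Dual ℚ (α →₀ ℚ)) (S : Finset α) :
    contractLeft d (extMonomial key S) =
      ∑ b ∈ S, ((-1) ^ rankIn key S b * d (Finsupp.single b 1)) •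
        extMonomial key (S.erase b) := by
  induction S using Finset.induction_on_min_value key with
  | empty => simp [extMonomial]
  | insert a S ha hmin ih =>
    rw [extMonomial_insert key ha hmin]
    erw [contractLeft_ι_mul]
    rw [ih, sum_insert ha, erase_insert ha, rankIn_of_forall_le key (by simpa using hmin),
      sub_eq_add_neg, mul_sum, ← sum_neg_distrib]
    congr 1
    · simp
    · refine sum_congr rfl fun b hb => ?_
      have hab : a ≠ b := fun h => ha (h ▸ hb)
      have hlt : key a < key b := lt_of_le_of_ne (hmin b hb) (key.injective.ne hab)
      rw [erase_insert_of_ne hab, extMonomial_insert key (by simp [ha])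
        (fun s hs => hmin s (mem_of_mem_erase hs)), rankIn_insert_of_lt key ha hlt, pow_succ]
      erw [mul_smul_comm]
      rw [← neg_smul]
      congr 1
      ring

lemma sum_mul_pfaffian_erase (key : α ↪ β) {A : α → α → ℚ} (hA : ∀ a b, A a b = -A b a)
    (x : α) (S : Finset α) :
    ∑ b ∈ S, (-1) ^ rankIn key S b * A x b * pfaffian key hA (S.erase b) =
      if x ∈ S then 0 else (-1) ^ rankIn key S x * pfaffian key hA (insert x S) := by
  have h : pfFunctional hA (ExteriorAlgebra.ι ℚ (Finsupp.single x 1) * extMonomial key S) =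
      ∑ b ∈ S, (-1) ^ rankIn key S b * A x b * pfaffian key hA (S.erase b) := by
    rw [pfFunctional_ι_mul, contractLeft_extMonomial, map_sum, ← sum_neg_distrib]
    refine sum_congr rfl fun b _ => ?_
    rw [map_smul, pfForm_single, pfaffian]
    simp
  rw [← h]
  split_ifs with hx
  · rw [ι_mul_extMonomial_of_mem key x S hx, map_zero]
  · rw [ι_mul_extMonomial_of_notMem key x S hx, map_smul, smul_eq_mul, pfaffian]

end Pfaffian

/-! ### Counting perfect matchings -/

section Pairing

variable {α : Type*}

/-- `f` is the partner map of a perfect matching of the subgraph of `G` induced on `S`, extended by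
the identity outside `S`. -/
def IsPairing (G : SimpleGraph α) (S : Finset α) (f : α → α) : Prop :=
  (∀ x ∈ S, f x ∈ S ∧ G.Adj x (f x) ∧ f (f x) = x) ∧ ∀ x ∉ S, f x = x

/-- The number of perfect matchings of the subgraph of `G` induced on `S`. -/
noncomputable def pairingCount (G : SimpleGraph α) (S : Finset α) : ℕ :=
  Nat.card {f : α → α // IsPairing G S f}

instance (G : SimpleGraph α) (S : Finset α) : Finite {f : α → α // IsPairing G S f} := by
  refine Finite.of_injective
    (fun f => fun x : S => (⟨f.1 x, (f.2.1 x x.2).1⟩ : S)) fun f g h => ?_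
  ext x
  by_cases hx : x ∈ S
  · simpa using congrArg Subtype.val (congrFun h ⟨x, hx⟩)
  · rw [f.2.2 x hx, g.2.2 x hx]

lemma pairingCount_empty (G : SimpleGraph α) : pairingCount G ∅ = 1 := by
  rw [pairingCount, Nat.card_eq_one_iff_exists]
  exact ⟨⟨id, by simp [IsPairing]⟩, fun f => Subtype.ext (funext fun x => f.2.2 x (by simp))⟩

lemma card_perfectMatching_induce (G : SimpleGraph α) (S : Finset α) (s : Set α)
    (hs : ∀ x, x ∈ s ↔ x ∈ S) :
    Nat.card {M : (G.induce s).Subgraph // M.IsPerfectMatching} = pairingCount G S := by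
  symm
  refine Nat.card_eq_of_bijective
    (fun f => ⟨{ verts := Set.univ
                 Adj := fun v w => f.1 v = w
                 adj_sub := fun {v w} h => by
                  have := (f.2.1 v ((hs v).1 v.2)).2.1
                  rw [h] at this
                  exact this
                 edge_vert := fun _ => Set.mem_univ _
                 symm := ⟨fun v w h => by
                  rw [← h]; exact (f.2.1 v ((hs v).1 v.2)).2.2⟩ }, ?_⟩) ⟨?_, ?_⟩
  · rw [SimpleGraph.Subgraph.isPerfectMatching_iff]
    intro v
    exact ⟨⟨f.1 v, (hs _).2 (f.2.1 v ((hs v).1 v.2)).1⟩, rfl,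
      fun w hw => Subtype.ext (Eq.symm (show f.1 v = w from hw))⟩
  · intro f g h
    ext x
    by_cases hx : x ∈ S
    · have h' := congrArg (fun M => M.1.Adj) h
      have hfx : f.1 x ∈ s := (hs _).2 (f.2.1 x hx).1
      have := congrFun (congrFun h' ⟨x, (hs x).2 hx⟩) ⟨f.1 x, hfx⟩
      exact Eq.symm (show g.1 x = f.1 x from this.mp rfl)
    · rw [f.2.2 x hx, g.2.2 x hx]
  · rintro ⟨M, hM⟩
    have hM' := SimpleGraph.Subgraph.isPerfectMatching_iff.1 hM
    choose p hp hpu using hM'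
    classical
    refine ⟨⟨fun x => if h : x ∈ s then p ⟨x, h⟩ else x, ?_, ?_⟩, ?_⟩
    · intro x hx
      have hxs := (hs x).2 hx
      simp only [hxs, dif_pos, (p ⟨x, hxs⟩).2]
      refine ⟨(hs _).1 (p ⟨x, hxs⟩).2, (hp ⟨x, hxs⟩).adj_sub, ?_⟩
      exact congrArg Subtype.val (hpu (p ⟨x, hxs⟩) ⟨x, hxs⟩ (hp ⟨x, hxs⟩).symm).symm
    · intro x hx
      simp [hs, hx]
    · refine Subtype.ext (SimpleGraph.Subgraph.ext ?_ ?_)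
      · exact (Set.eq_univ_of_forall hM.2).symm
      · ext v w
        simp only [v.2, dif_pos, Subtype.coe_eta]
        exact ⟨fun h => Subtype.ext h ▸ hp v, fun h => congrArg Subtype.val (hpu v w h).symm⟩

lemma pairingCount_insert [DecidableEq α] (G : SimpleGraph α) [DecidableRel G.Adj] {a : α}
    {S : Finset α} (ha : a ∉ S) :
    pairingCount G (insert a S) = ∑ b ∈ S with G.Adj a b, pairingCount G (S.erase b) := by
  let T := {b // b ∈ S.filter (G.Adj a)}
  have hT : ∀ b : T, b.1 ∈ S ∧ G.Adj a b.1 := fun b => mem_filter.1 b.2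
  have e : {f : α → α // IsPairing G (insert a S) f} ≃
      Σ b : T, {f : α → α // IsPairing G (S.erase b.1) f} :=
    { toFun := fun f => ⟨⟨f.1 a, by
          have h := f.2.1 a (mem_insert_self a S)
          exact mem_filter.2 ⟨(mem_insert.1 h.1).resolve_left h.2.1.ne', h.2.1⟩⟩,
        ⟨fun x => if x = a ∨ x = f.1 a then x else f.1 x, by
          obtain ⟨f, hf1, hf2⟩ := f
          have h := hf1 a (mem_insert_self a S)
          constructor
          · intro x hx
            obtain ⟨hxne, hxS⟩ := mem_erase.1 hx
            have hxa : x ≠ a := fun h => ha (h ▸ hxS)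
            have hx' := hf1 x (mem_insert_of_mem hxS)
            have h1 : f x ≠ a := fun h' => hxne (by rw [← hx'.2.2, h'])
            have h2 : f x ≠ f a := fun h' => hxa (by rw [← hx'.2.2, h', h.2.2])
            simp only [hxa, hxne, h1, h2, or_self, if_false]
            exact ⟨mem_erase.2 ⟨h2, (mem_insert.1 hx'.1).resolve_left h1⟩, hx'.2⟩
          · intro x hx
            change (if x = a ∨ x = f a then x else f x) = x
            split_ifs with hc
            · rfl
            · push Not at hc
              refine hf2 x fun hxi => hx (mem_erase.2 ⟨hc.2, ?_⟩)
              exact (mem_insert.1 hxi).resolve_left hc.1⟩⟩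
      invFun := fun g => ⟨fun x => if x = a then g.1.1 else if x = g.1.1 then a else g.2.1 x, by
          obtain ⟨b, f, hf1, hf2⟩ := g
          obtain ⟨hbS, hab⟩ := hT b
          have hba : b.1 ≠ a := hab.ne'
          constructor
          · intro x hx
            by_cases hxa : x = a
            · simp [hxa, hba, hbS, hab]
            · by_cases hxb : x = b.1
              · simp [hxb, hba, hab.symm]
              · have hxS := (mem_insert.1 hx).resolve_left hxa
                have h := hf1 x (mem_erase.2 ⟨hxb, hxS⟩)
                obtain ⟨h1, h2⟩ := mem_erase.1 h.1
                have h3 : f x ≠ a := fun h' => ha (h' ▸ h2)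
                simp only [hxa, hxb, h1, h3, if_false]
                exact ⟨mem_insert_of_mem h2, h.2⟩
          · intro x hx
            simp only [mem_insert, not_or] at hx
            have hxb : x ≠ b.1 := fun h => hx.2 (h ▸ hbS)
            simp only [hx.1, hxb, if_false]
            exact hf2 x fun h => hx.2 (mem_of_mem_erase h)⟩
      left_inv := fun ⟨f, hf1, hf2⟩ => by
        have h := (hf1 a (mem_insert_self a S)).2.2
        ext x
        by_cases hxa : x = a
        · simp [hxa]
        · by_cases hxb : x = f a
          · simp [hxb, h]
          · simp [hxa, hxb]
      right_inv := fun ⟨b, f, hf1, hf2⟩ => by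
        obtain ⟨hbS, hab⟩ := hT b
        refine Sigma.ext (Subtype.ext (by simp)) ?_
        have hset : ∀ b' : T, b' = b → ∀ g : {f : α → α // IsPairing G (S.erase b'.1) f},
            g.1 = f → g ≍ (⟨f, hf1, hf2⟩ : {f : α → α // IsPairing G (S.erase b.1) f}) := by
          rintro _ rfl g rfl
          rfl
        refine hset _ (Subtype.ext (by simp)) _ (funext fun x => ?_)
        have hfa : f a = a := hf2 a fun h => ha (mem_of_mem_erase h)
        have hfb : f b.1 = b.1 := hf2 b.1 (by simp)
        by_cases hxa : x = a
        · simp [hxa, hfa]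
        · by_cases hxb : x = b.1
          · simp [hxb, hfb]
          · simp [hxa, hxb] }
  rw [pairingCount, Nat.card_congr e, Nat.card_sigma,
    ← Finset.sum_coe_sort _ fun b => pairingCount G (S.erase b)]
  rfl

end Pairing

/-! ### The sign of every perfect matching -/

section Brick

/-- The lexicographic order on the vertices: column by column, upwards in each column. -/
def lexKey : ℤ × ℤ ↪ ℤ ×ₗ ℤ := (toLex (α := ℤ × ℤ)).toEmbedding

lemma lexKey_lt {x y : ℤ × ℤ} :
    lexKey x < lexKey y ↔ x.1 < y.1 ∨ x.1 = y.1 ∧ x.2 < y.2 :=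
  Prod.Lex.toLex_lt_toLex

lemma lexKey_le {x y : ℤ × ℤ} :
    lexKey x ≤ lexKey y ↔ x.1 < y.1 ∨ x.1 = y.1 ∧ x.2 ≤ y.2 :=
  Prod.Lex.toLex_le_toLex

/-- The signs conjugating `K_n` to a matrix in which all vertical entries have the same sign. -/
def gaugeSign (x : ℤ × ℤ) : ℚ := if (x.2 - x.1) % 4 < 2 then 1 else -1

lemma gaugeSign_mul_self (x : ℤ × ℤ) : gaugeSign x * gaugeSign x = 1 := by
  unfold gaugeSign; split_ifs <;> norm_num

/-- The entries of the Kasteleyn matrix conjugated by `gaugeSign`. -/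
def twist (x y : ℤ × ℤ) : ℚ := gaugeSign x * gaugeSign y * (kfun x y - kfun y x)

lemma twist_antisymm (x y : ℤ × ℤ) : twist x y = -twist y x := by
  unfold twist; ring

lemma twist_up (c h : ℤ) : twist (c, h) (c, h + 1) = 1 := by
  unfold twist gaugeSign kfun
  dsimp only
  split_ifs <;> first | (exfalso; omega) | norm_num

lemma twist_right {c h : ℤ} (hodd : (c + h) % 2 = 1) : twist (c, h) (c + 1, h) = -1 := by
  unfold twist gaugeSign kfun
  dsimp only
  split_ifs <;> first | (exfalso; omega) | norm_num

lemma twist_diag (c : ℤ) : twist (c, c) (c + 1, c + 1) = -1 := by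
  unfold twist gaugeSign kfun
  dsimp only
  split_ifs <;> first | (exfalso; omega) | norm_num

lemma adj_of_kfun_ne_zero {n : ℕ} {x y : ℤ × ℤ} (hx : memV n x) (hy : memV n y)
    (h : kfun x y ≠ 0) : (Gph n).Adj x y := by
  obtain ⟨x1, x2⟩ := x
  obtain ⟨y1, y2⟩ := y
  simp only [memV] at hx hy
  simp only [kfun, ne_eq, ite_eq_right_iff, one_ne_zero, imp_false, not_not] at h
  simp only [Gph, edgeRel, Int.odd_iff]
  rcases h with h | ⟨h0, h1, h2 | h2⟩ | h
  · right; left; omega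
  · left; right; left; omega
  · right; right; left; omega
  · right; right; right; omega

lemma twist_eq_zero {n : ℕ} {x y : ℤ × ℤ} (hx : memV n x) (hy : memV n y)
    (h : ¬(Gph n).Adj x y) : twist x y = 0 := by
  have h1 : kfun x y = 0 := by_contra fun h' => h (adj_of_kfun_ne_zero hx hy h')
  have h2 : kfun y x = 0 := by_contra fun h' => h (adj_of_kfun_ne_zero hy hx h').symm
  simp [twist, h1, h2]

lemma adj_later {n : ℕ} {c h : ℤ} {b : ℤ × ℤ} (hadj : (Gph n).Adj (c, h) b)
    (hb : c < b.1 ∨ b.1 = c ∧ h < b.2) :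
    b = (c, h + 1) ∨ (c + h) % 2 = 1 ∧ b = (c + 1, h) ∨ h = c ∧ b = (c + 1, c + 1) := by
  obtain ⟨b1, b2⟩ := b
  simp only [Gph, edgeRel, Int.odd_iff] at hadj hb
  simp only [Prod.mk.injEq]
  omega

/-- The Pfaffian of the conjugated Kasteleyn matrix restricted to `S`. -/
noncomputable def kastPf (S : Finset (ℤ × ℤ)) : ℚ := pfaffian lexKey twist_antisymm S

lemma kastPf_insert (n : ℕ) {a : ℤ × ℤ} {S : Finset (ℤ × ℤ)} (sgn : ℚ) (ha : memV n a)
    (hS : ∀ b ∈ S, memV n b) (hmin : ∀ b ∈ S, lexKey a < lexKey b)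
    (hstep : ∀ b ∈ S, (Gph n).Adj a b →
      (-1) ^ rankIn lexKey S b * twist a b * kastPf (S.erase b) =
        sgn * pairingCount (Gph n) (S.erase b)) :
    kastPf (insert a S) = sgn * pairingCount (Gph n) (insert a S) := by
  classical
  have haS : a ∉ S := fun h => lt_irrefl _ (hmin a h)
  have h := sum_mul_pfaffian_erase lexKey twist_antisymm a S
  rw [if_neg haS, rankIn_of_forall_le lexKey fun b hb => (hmin b hb).le, pow_zero,
    one_mul] at h
  rw [kastPf, ← h, pairingCount_insert (Gph n) haS, Nat.cast_sum, mul_sum, sum_filter]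
  refine sum_congr rfl fun b hb => ?_
  split_ifs with hadj
  · exact hstep b hb hadj
  · rw [twist_eq_zero ha (hS b hb) hadj]; ring

/-- The vertices of `V` not before `(c, h)` and not in `D`. -/
def front (V : Finset (ℤ × ℤ)) (c h : ℤ) (D : Finset (ℤ × ℤ)) : Finset (ℤ × ℤ) :=
  {x ∈ V | (c < x.1 ∨ x.1 = c ∧ h ≤ x.2) ∧ x ∉ D}

lemma mem_front {V : Finset (ℤ × ℤ)} {c h : ℤ} {D : Finset (ℤ × ℤ)} {x : ℤ × ℤ} :
    x ∈ front V c h D ↔ x ∈ V ∧ (c < x.1 ∨ x.1 = c ∧ h ≤ x.2) ∧ x ∉ D := by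
  simp [front]

/-- `V` is a set of vertices of `G_n` such that column `c` consists of the vertices at heights
`c, …, T c - 1`. -/
structure IsColumnar (n : ℕ) (V : Finset (ℤ × ℤ)) (T : ℤ → ℤ) : Prop where
  mem_iff : ∀ x, x ∈ V ↔ 0 ≤ x.1 ∧ x.1 ≤ 2 * n ∧ x.1 ≤ x.2 ∧ x.2 < T x.1
  le_top : ∀ c, 0 ≤ c → c ≤ 2 * n → c ≤ T c
  memV : ∀ x ∈ V, memV n x

variable {n : ℕ} {V : Finset (ℤ × ℤ)} {T : ℤ → ℤ}

lemma rankIn_front (hV : IsColumnar n V T) {c h h' : ℤ} {D : Finset (ℤ × ℤ)} (hc0 : 0 ≤ c)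
    (hch : c ≤ h) (hT : h < T c) (hb : (c + 1, h') ∈ V)
    (hD : ∀ x ∈ D, x ∈ V ∧ (x.1 = c ∧ h < x.2 ∨ x.1 = c + 1 ∧ x.2 < h')) :
    (rankIn lexKey (front V c (h + 1) D) (c + 1, h') : ℤ) + #D =
      (T c - h - 1) + (h' - c - 1) := by
  have hb' := (hV.mem_iff _).1 hb
  simp only at hb'
  have hunion : {s ∈ front V c (h + 1) D | lexKey s < lexKey (c + 1, h')} ∪ D =
      {c} ×ˢ Ioo h (T c) ∪ {c + 1} ×ˢ Ico (c + 1) h' := by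
    ext ⟨x1, x2⟩
    simp only [mem_union, mem_filter, mem_front, lexKey_lt, mem_product, mem_singleton, mem_Ioo,
      mem_Ico]
    have hx := hV.mem_iff (x1, x2)
    have hxD := hD (x1, x2)
    simp only at hx hxD
    by_cases hxd : (x1, x2) ∈ D
    · have h1 := hxD hxd
      have h2 := hx.1 h1.1
      simp only [hxd, or_true, true_iff]
      rcases h1.2 with h3 | h3
      · left; refine ⟨h3.1, h3.2, ?_⟩; rw [← h3.1]; exact h2.2.2.2
      · right; omega
    · simp only [hxd, hx, or_false, not_false_eq_true, and_true]
      constructor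
      · rintro ⟨⟨h1, h2⟩, h3⟩
        rcases h2 with h2 | h2
        · right; omega
        · left; refine ⟨h2.1, by omega, ?_⟩; rw [← h2.1]; exact h1.2.2.2
      · rintro (⟨rfl, h1⟩ | ⟨rfl, h1⟩) <;> omega
  have hd1 : Disjoint {s ∈ front V c (h + 1) D | lexKey s < lexKey (c + 1, h')} D := by
    rw [disjoint_left]
    intro x hx
    exact (mem_front.1 (mem_filter.1 hx).1).2.2
  have hd2 : Disjoint (({c} : Finset ℤ) ×ˢ Ioo h (T c)) ({c + 1} ×ˢ Ico (c + 1) h') := by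
    rw [disjoint_left]
    rintro ⟨x1, x2⟩ h1 h2
    simp only [mem_product, mem_singleton] at h1 h2
    omega
  have hcard := congrArg card hunion
  rw [card_union_of_disjoint hd1, card_union_of_disjoint hd2] at hcard
  simp only [card_product, card_singleton, Int.card_Ioo, Int.card_Ico, one_mul] at hcard
  unfold rankIn
  omega

lemma neg_one_pow_eq_of_parity {r q : ℕ} (h : (r + q) % 2 = 0) : (-1 : ℚ) ^ r = (-1) ^ q := by
  rw [neg_one_pow_eq_pow_mod_two, neg_one_pow_eq_pow_mod_two (n := q)]
  congr 1
  omega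

lemma kastPf_column (hV : IsColumnar n V T) {c : ℤ} (hc0 : 0 ≤ c) (hcn : c ≤ 2 * n) (Q : ℕ)
    (tail : ℚ)
    (hnext : ∀ D : Finset (ℤ × ℤ), (∀ x ∈ D, x ∈ V ∧ x.1 = c + 1 ∧ (x.1 + x.2) % 2 = 0) →
      (#D + Q) % 2 = 0 → kastPf (front V (c + 1) (c + 1) D) =
        tail * pairingCount (Gph n) (front V (c + 1) (c + 1) D))
    (k : ℕ) : ∀ (h : ℤ) (D : Finset (ℤ × ℤ)), (T c - h).toNat = k → c ≤ h → h ≤ T c →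
      (∀ x ∈ D, x ∈ V ∧ (x.1 + x.2) % 2 = 0 ∧
        (x.1 = c ∧ h ≤ x.2 ∨ x.1 = c + 1 ∧ x.2 ≤ h)) →
      ((#D : ℤ) + h + T c + Q) % 2 = 0 →
      kastPf (front V c h D) = ((-1) ^ Q) ^ (1 + #{x ∈ D | x.1 = c + 1}) * tail *
        pairingCount (Gph n) (front V c h D) := by
  induction k using Nat.strong_induction_on with
  | _ k ih =>
  intro h D hk hch hhT hD hinv
  have hmV : ∀ x2, (c, x2) ∈ V ↔ c ≤ x2 ∧ x2 < T c := fun x2 => by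
    rw [hV.mem_iff]; simp only; omega
  rcases eq_or_lt_of_le hhT with rfl | hlt
  · -- the column is exhausted
    have hD' : ∀ x ∈ D, x.1 = c + 1 := by
      rintro ⟨x1, x2⟩ hx
      obtain ⟨h1, -, h3 | h3⟩ := hD _ hx
      · simp only at h3
        rw [h3.1, hmV] at h1
        omega
      · exact h3.1
    have hfront : front V c (T c) D = front V (c + 1) (c + 1) D := by
      ext ⟨x1, x2⟩
      have hx := hV.mem_iff (x1, x2)
      have hx' := hmV x2
      simp only [mem_front]
      by_cases hxc : x1 = c
      · subst hxc; grind
      · grind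
    have hpar : (#D + Q) % 2 = 0 := by omega
    rw [hfront, hnext D (fun x hx => ⟨(hD x hx).1, hD' x hx, (hD x hx).2.1⟩) hpar,
      filter_true_of_mem hD', ← pow_mul, Even.neg_one_pow, one_mul]
    rcases Nat.even_or_odd Q with he | ho
    · exact he.mul_right _
    · refine Even.mul_left ?_ _
      rw [Nat.odd_iff] at ho
      rw [Nat.even_iff]
      omega
  · have haV : (c, h) ∈ V := (hmV h).2 ⟨hch, hlt⟩
    by_cases haD : (c, h) ∈ D
    · have hfront : front V c h D = front V c (h + 1) (D.erase (c, h)) := by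
        ext ⟨x1, x2⟩
        by_cases hxa : (x1, x2) = (c, h)
        · simp only [Prod.mk.injEq] at hxa
          obtain ⟨rfl, rfl⟩ := hxa
          simp [mem_front, haD]
        · simp only [mem_front, mem_erase, ne_eq, hxa, not_false_eq_true, true_and]
          grind
      have hm : #{x ∈ D.erase (c, h) | x.1 = c + 1} = #{x ∈ D | x.1 = c + 1} := by
        rw [filter_erase, erase_eq_of_notMem]
        simp
      have hcard := card_erase_add_one haD
      rw [hfront, ih (k - 1) (by omega) (h + 1) (D.erase (c, h)) (by omega) (by omega) (by omega)
        ?_ ?_, hm]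
      · rintro ⟨x1, x2⟩ hx
        obtain ⟨hxne, hxD⟩ := mem_erase.1 hx
        obtain ⟨h1, h2, h3⟩ := hD _ hxD
        refine ⟨h1, h2, ?_⟩
        simp only [ne_eq, Prod.mk.injEq] at hxne h3 ⊢
        omega
      · omega
    · have hfront : front V c h D = insert (c, h) (front V c (h + 1) D) := by
        ext ⟨x1, x2⟩
        by_cases hxa : (x1, x2) = (c, h)
        · simp only [hxa, mem_front, haV, haD, mem_insert, true_or, iff_true]
          simp
        · simp only [mem_front, mem_insert, hxa, false_or]
          grind
      have hinsert : ∀ b : ℤ × ℤ, b.1 = c + 1 → b ∉ D → (b.1 + b.2) % 2 = 0 → b ∈ V →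
          b.2 ≤ h + 1 → (rankIn lexKey (front V c (h + 1) D) b + 1 + Q) % 2 = 0 →
          twist (c, h) b = -1 →
          (-1) ^ rankIn lexKey (front V c (h + 1) D) b * twist (c, h) b *
            kastPf ((front V c (h + 1) D).erase b) =
          ((-1) ^ Q) ^ (1 + #{x ∈ D | x.1 = c + 1}) * tail *
            pairingCount (Gph n) ((front V c (h + 1) D).erase b) := by
        intro b hb1 hbD hbe hbV hb2 hr htw
        have herase : (front V c (h + 1) D).erase b = front V c (h + 1) (insert b D) := by
          ext x
          simp only [mem_erase, mem_front, mem_insert, not_or]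
          tauto
        have hm : #{x ∈ insert b D | x.1 = c + 1} = #{x ∈ D | x.1 = c + 1} + 1 := by
          rw [filter_insert, if_pos hb1, card_insert_of_notMem (by simp [hbD])]
        have hcard := card_insert_of_notMem hbD
        rw [herase, ih (k - 1) (by omega) (h + 1) (insert b D) (by omega) (by omega) (by omega)
          ?_ ?_, hm, htw]
        · have hs : (-1 : ℚ) ^ rankIn lexKey (front V c (h + 1) D) b * -1 = (-1) ^ Q := by
            rw [← pow_succ]; exact neg_one_pow_eq_of_parity hr
          have hsq : ((-1 : ℚ) ^ Q) * (-1) ^ Q = 1 := by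
            rw [← mul_pow]; norm_num
          rw [hs, pow_add _ 1, pow_add _ 1, pow_succ]
          linear_combination ((-1 : ℚ) ^ Q) * ((-1 : ℚ) ^ Q) ^ #{x ∈ D | x.1 = c + 1} * tail *
            pairingCount (Gph n) (front V c (h + 1) (insert b D)) * hsq
        · rintro ⟨x1, x2⟩ hx
          rcases mem_insert.1 hx with rfl | hxD
          · exact ⟨hbV, hbe, Or.inr ⟨hb1, hb2⟩⟩
          · obtain ⟨h1, h2, h3⟩ := hD _ hxD
            have hxne : (x1, x2) ≠ (c, h) := fun h' => haD (h' ▸ hxD)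
            refine ⟨h1, h2, ?_⟩
            simp only [ne_eq, Prod.mk.injEq] at hxne h3 ⊢
            omega
        · omega
      rw [hfront]
      refine kastPf_insert n _ (hV.memV _ haV) (fun b hb => hV.memV b (mem_front.1 hb).1) ?_ ?_
      · rintro ⟨b1, b2⟩ hb
        obtain ⟨-, hb, -⟩ := mem_front.1 hb
        rw [lexKey_lt]
        simp only at hb ⊢
        omega
      intro b hb hadj
      obtain ⟨hbV, hbl, hbD⟩ := mem_front.1 hb
      rcases adj_later hadj (by omega) with rfl | ⟨hodd, rfl⟩ | ⟨rfl, rfl⟩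
      · have hbV' := (hmV _).1 hbV
        have hrank : rankIn lexKey (front V c (h + 1) D) (c, h + 1) = 0 := by
          refine rankIn_of_forall_le _ fun x hx => ?_
          have := (mem_front.1 hx).2.1
          rw [lexKey_le]
          simp only
          omega
        have herase : (front V c (h + 1) D).erase (c, h + 1) = front V c (h + 1 + 1) D := by
          ext ⟨x1, x2⟩
          simp only [mem_erase, mem_front, ne_eq, Prod.mk.injEq]
          grind
        rw [hrank, twist_up, herase, ih (k - 2) (by omega) (h + 1 + 1) D (by omega) (by omega)
          (by omega) ?_ (by omega)]
        · ring
        · rintro ⟨x1, x2⟩ hxD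
          obtain ⟨h1, h2, h3⟩ := hD _ hxD
          have hxne : (x1, x2) ≠ (c, h) := fun h' => haD (h' ▸ hxD)
          have hxne' : (x1, x2) ≠ (c, h + 1) := fun h' => hbD (h' ▸ hxD)
          refine ⟨h1, h2, ?_⟩
          simp only [ne_eq, Prod.mk.injEq] at hxne hxne' h3 ⊢
          omega
      · have hrank := rankIn_front hV (h := h) (h' := h) (D := D) hc0 hch hlt hbV ?_
        · exact hinsert _ rfl hbD (by simp only; omega) hbV (by simp) (by omega)
            (twist_right hodd)
        · rintro ⟨x1, x2⟩ hxD
          obtain ⟨h1, h2, h3⟩ := hD _ hxD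
          have hxne : (x1, x2) ≠ (c, h) := fun h' => haD (h' ▸ hxD)
          have hxne' : (x1, x2) ≠ (c + 1, h) := fun h' => hbD (h' ▸ hxD)
          refine ⟨h1, ?_⟩
          simp only [ne_eq, Prod.mk.injEq] at hxne hxne' h3 ⊢
          omega
      · have hrank := rankIn_front hV (h := h) (h' := h + 1) (D := D) hc0 hch hlt hbV ?_
        · exact hinsert _ rfl hbD (by simp only; omega) hbV (by simp) (by omega) (twist_diag h)
        · rintro ⟨x1, x2⟩ hxD
          obtain ⟨h1, h2, h3⟩ := hD _ hxD
          have hxne : (x1, x2) ≠ (h, h) := fun h' => haD (h' ▸ hxD)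
          have h4 := (hV.mem_iff _).1 h1
          refine ⟨h1, ?_⟩
          simp only [ne_eq, Prod.mk.injEq] at hxne h3 h4 ⊢
          omega

/-- The parity sum governing the signs: total length of the columns before `c`. -/
def colSum (T : ℤ → ℤ) (c : ℕ) : ℕ := ∑ k ∈ range c, (T k - k).toNat

lemma kastPf_front (hV : IsColumnar n V T) (k : ℕ) : ∀ c : ℕ, c + k = 2 * n + 1 →
    ∀ D : Finset (ℤ × ℤ), (∀ x ∈ D, x ∈ V ∧ x.1 = c ∧ (x.1 + x.2) % 2 = 0) →
      (#D + colSum T c) % 2 = 0 → kastPf (front V c c D) =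
        (∏ i ∈ Ico c (2 * n + 1), (-1) ^ colSum T (i + 1)) *
          pairingCount (Gph n) (front V c c D) := by
  induction k with
  | zero =>
    intro c hc D _ _
    have : front V c c D = ∅ := by
      ext x
      have hx := hV.mem_iff x
      simp only [mem_front, notMem_empty, iff_false]
      grind
    rw [this, kastPf, pfaffian_empty, pairingCount_empty, Ico_eq_empty (by omega)]
    simp
  | succ k ih =>
    intro c hc D hD hpar
    have hle := hV.le_top c (by omega) (by omega)
    have hsum : colSum T (c + 1) = colSum T c + (T c - c).toNat := sum_range_succ _ _
    have hne : ∀ x ∈ D, x.1 ≠ (c : ℤ) + 1 := fun x hx => by have := (hD x hx).2.1; omega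
    have hpar' : ((#D : ℤ) + c + T c + colSum T (c + 1) : ℤ) % 2 = 0 := by omega
    rw [kastPf_column hV (by omega) (by omega) (colSum T (c + 1))
      (∏ i ∈ Ico (c + 1) (2 * n + 1), (-1) ^ colSum T (i + 1)) ?_ _ c D rfl le_rfl hle ?_
      hpar', filter_false_of_mem hne, prod_eq_prod_Ico_succ_bot (show c < 2 * n + 1 by omega)]
    · simp
    · intro D' hD' hpar'
      have := ih (c + 1) (by omega) D' (by simpa using hD') hpar'
      simpa using this
    · rintro x hx
      obtain ⟨h1, h2, h3⟩ := hD x hx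
      have h4 := (hV.mem_iff x).1 h1
      exact ⟨h1, h3, by omega⟩

lemma kastPf_eq (hV : IsColumnar n V T) :
    kastPf V = (∏ i ∈ range (2 * n + 1), (-1) ^ colSum T (i + 1)) * pairingCount (Gph n) V := by
  have h := kastPf_front hV (2 * n + 1) 0 (by simp) ∅ (by simp) (by simp [colSum])
  have hfront : front V 0 0 ∅ = V := by
    ext x
    have hx := hV.mem_iff x
    simp only [mem_front, notMem_empty, not_false_eq_true, and_true]
    grind
  rw [Nat.cast_zero, hfront, ← range_eq_Ico] at h
  exact h

end Brick

/-! ### The top row of the inverse Kasteleyn matrix -/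

section TopRow

lemma mem_Vfin {n : ℕ} {x : ℤ × ℤ} : x ∈ Vfin n ↔ memV n x := by
  simp only [Vfin, mem_filter, mem_product, mem_Icc, memV]
  omega

/-- The partner map of a perfect matching of `G_n` consisting of vertical edges, except that the
bottom vertices of columns `4m + 1` and `4m + 2` are joined by a diagonal edge and the following
vertices of columns `4m + 2` and `4m + 3` by a horizontal one. -/
def stdPartner (x : ℤ × ℤ) : ℤ × ℤ :=
  if x.1 % 4 = 1 ∧ x.2 = x.1 then (x.1 + 1, x.2 + 1)
  else if x.1 % 4 = 2 ∧ x.2 = x.1 then (x.1 - 1, x.2 - 1)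
  else if x.1 % 4 = 2 ∧ x.2 = x.1 + 1 then (x.1 + 1, x.2)
  else if x.1 % 4 = 3 ∧ x.2 = x.1 then (x.1 - 1, x.2)
  else if x.2 % 2 = 0 then (x.1, x.2 + 1)
  else (x.1, x.2 - 1)

lemma stdPartner_stdPartner {x : ℤ × ℤ} (hx : x.1 ≤ x.2) : stdPartner (stdPartner x) = x := by
  obtain ⟨c, h⟩ := x
  dsimp only at hx
  obtain ⟨y, hy⟩ : ∃ y, y = stdPartner (c, h) := ⟨_, rfl⟩
  rw [← hy]
  unfold stdPartner at hy
  dsimp only at hy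
  split_ifs at hy <;> subst hy <;> unfold stdPartner <;> dsimp only <;> split_ifs <;>
    first | (exfalso; omega) | (rw [Prod.mk.injEq]; omega)

lemma memV_stdPartner {n : ℕ} {x : ℤ × ℤ} (hx : memV n x) : memV n (stdPartner x) := by
  obtain ⟨c, h⟩ := x
  unfold memV at *
  unfold stdPartner
  dsimp only at *
  split_ifs <;> dsimp only <;> omega

lemma adj_stdPartner {n : ℕ} {x : ℤ × ℤ} (hx : memV n x) : (Gph n).Adj x (stdPartner x) := by
  obtain ⟨c, h⟩ := x
  unfold memV at hx
  simp only [Gph, edgeRel, Int.odd_iff]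
  unfold stdPartner
  dsimp only at *
  split_ifs <;> dsimp only
  · left; right; right; omega
  · right; right; right; omega
  · left; left; omega
  · right; left; omega
  · left; right; left; omega
  · right; right; left; omega

lemma pairingCount_Vfin_ne_zero (n : ℕ) : pairingCount (Gph n) (Vfin n) ≠ 0 := by
  have : Nonempty {f : ℤ × ℤ → ℤ × ℤ // IsPairing (Gph n) (Vfin n) f} := by
    refine ⟨fun x => if x ∈ Vfin n then stdPartner x else x, fun x hx => ?_, fun x hx => if_neg hx⟩
    have hV := mem_Vfin.1 hx
    have hV' := mem_Vfin.2 (memV_stdPartner hV)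
    simp only [if_pos hx, if_pos hV']
    exact ⟨hV', adj_stdPartner hV, stdPartner_stdPartner hV.2.2.1⟩
  exact Nat.card_pos.ne'

/-- The heights of the columns of `V_n`. -/
def colTop (n : ℕ) (c : ℤ) : ℤ := if n % 2 = 1 ∧ c = 2 * n then 2 * n + 1 else 2 * n + 2

lemma isColumnar_Vfin (n : ℕ) : IsColumnar n (Vfin n) (colTop n) where
  mem_iff x := by
    rw [mem_Vfin, memV, colTop]
    split_ifs <;> omega
  le_top c _ _ := by
    rw [colTop]
    split_ifs <;> omega
  memV x hx := mem_Vfin.1 hx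

/-- The heights of the columns of `V_n` with the top vertices of columns `2i` and `2j` removed. -/
def colTopErase (n i j : ℕ) (c : ℤ) : ℤ :=
  colTop n c - (if c = 2 * i ∨ c = 2 * j then 1 else 0)

variable {n i j : ℕ}

lemma isColumnar_erase (hij : i < j) (hj : j + 1 ≤ n) :
    IsColumnar n (((Vfin n).erase (2 * (j : ℤ), 2 * (n : ℤ) + 1)).erase
      (2 * (i : ℤ), 2 * (n : ℤ) + 1)) (colTopErase n i j) where
  mem_iff x := by
    obtain ⟨c, h⟩ := x
    simp only [mem_erase, ne_eq, Prod.mk.injEq, mem_Vfin, memV, colTopErase, colTop]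
    split_ifs <;> omega
  le_top c _ _ := by
    simp only [colTopErase, colTop]
    split_ifs <;> omega
  memV x hx := mem_Vfin.1 (mem_of_mem_erase (mem_of_mem_erase hx))

lemma colSum_colTopErase (hij : i < j) (hj : j + 1 ≤ n) {m : ℕ} (hm : m ≤ 2 * n + 1) :
    colSum (colTopErase n i j) m + (if 2 * i < m then 1 else 0) + (if 2 * j < m then 1 else 0) =
      colSum (colTop n) m := by
  induction m with
  | zero => simp [colSum]
  | succ m ih =>
    have ih := ih (by omega)
    simp only [colSum, sum_range_succ, colTopErase, colTop] at ih ⊢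
    split_ifs at ih ⊢ <;> omega

lemma prod_ite_neg_one (a N : ℕ) :
    ∏ c ∈ range N, (-1 : ℚ) ^ (if a < c + 1 then 1 else 0) = (-1) ^ (N - a) := by
  induction N with
  | zero => simp
  | succ N ih =>
    rw [prod_range_succ, ih, ← pow_add]
    congr 1
    split_ifs <;> omega

lemma prod_colSum_colTopErase (hij : i < j) (hj : j + 1 ≤ n) :
    ∏ c ∈ range (2 * n + 1), (-1 : ℚ) ^ colSum (colTop n) (c + 1) =
      ∏ c ∈ range (2 * n + 1), (-1) ^ colSum (colTopErase n i j) (c + 1) := by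
  have hprod : ∀ c ∈ range (2 * n + 1), (-1 : ℚ) ^ colSum (colTop n) (c + 1) =
      (-1) ^ colSum (colTopErase n i j) (c + 1) * (-1) ^ (if 2 * i < c + 1 then 1 else 0) *
        (-1) ^ (if 2 * j < c + 1 then 1 else 0) := fun c hc => by
    rw [← colSum_colTopErase hij hj (mem_range.1 hc), pow_add, pow_add]
  rw [prod_congr rfl hprod, prod_mul_distrib, prod_mul_distrib, prod_ite_neg_one,
    prod_ite_neg_one, mul_assoc, ← pow_add,
    neg_one_pow_eq_of_parity (q := 0) (by omega), pow_zero, mul_one]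

lemma kastPf_div_kastPf (hij : i < j) (hj : j + 1 ≤ n) :
    kastPf (((Vfin n).erase (2 * (j : ℤ), 2 * (n : ℤ) + 1)).erase
      (2 * (i : ℤ), 2 * (n : ℤ) + 1)) / kastPf (Vfin n) =
    pairingCount (Gph n) (((Vfin n).erase (2 * (j : ℤ), 2 * (n : ℤ) + 1)).erase
      (2 * (i : ℤ), 2 * (n : ℤ) + 1)) / pairingCount (Gph n) (Vfin n) := by
  rw [kastPf_eq (isColumnar_Vfin n), kastPf_eq (isColumnar_erase hij hj),
    prod_colSum_colTopErase hij hj]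
  exact mul_div_mul_left _ _ (prod_ne_zero_iff.2 fun _ _ => pow_ne_zero _ (by norm_num))

lemma kastPf_Vfin_ne_zero (n : ℕ) : kastPf (Vfin n) ≠ 0 := by
  rw [kastPf_eq (isColumnar_Vfin n)]
  exact mul_ne_zero (prod_ne_zero_iff.2 fun _ _ => pow_ne_zero _ (by norm_num))
    (Nat.cast_ne_zero.2 (pairingCount_Vfin_ne_zero n))

lemma card_filter_fst_lt {V : Finset (ℤ × ℤ)} {T : ℤ → ℤ} (hV : IsColumnar n V T) {m : ℕ}
    (hm : m ≤ 2 * n + 1) : #{x ∈ V | x.1 < (m : ℤ)} = colSum T m := by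
  induction m with
  | zero =>
    rw [card_eq_zero.2 (filter_false_of_mem fun x hx => ?_)]
    · simp [colSum]
    · have := (hV.mem_iff x).1 hx
      simp only [Nat.cast_zero]
      omega
  | succ m ih =>
    have hunion : {x ∈ V | x.1 < ((m + 1 : ℕ) : ℤ)} =
        {x ∈ V | x.1 < (m : ℤ)} ∪ {(m : ℤ)} ×ˢ Ico (m : ℤ) (T m) := by
      ext ⟨c, h⟩
      simp only [mem_filter, mem_union, mem_product, mem_singleton, mem_Ico, hV.mem_iff]
      by_cases hc : c = m
      · subst hc; omega
      · omega
    rw [hunion, card_union_of_disjoint, ih (by omega), card_product, card_singleton, Int.card_Ico,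
      one_mul, colSum, colSum, sum_range_succ]
    rw [disjoint_left]
    rintro ⟨c, h⟩ h1 h2
    simp only [mem_filter, mem_product, mem_singleton] at h1 h2
    omega

lemma colSum_colTop_even (hj : j ≤ n) : (colSum (colTop n) (2 * j) + j) % 2 = 0 := by
  induction j with
  | zero => simp [colSum]
  | succ j ih =>
    have ih := ih (by omega)
    rw [show 2 * (j + 1) = 2 * j + 1 + 1 by ring]
    simp only [colSum, sum_range_succ, colTop] at ih ⊢
    split_ifs <;> omega

lemma rankIn_top (hj : j + 1 ≤ n) :
    (rankIn lexKey (Vfin n) (2 * (j : ℤ), 2 * (n : ℤ) + 1) + (j + 1)) % 2 = 0 := by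
  have hcard := card_filter_fst_lt (isColumnar_Vfin n) (m := 2 * j) (by omega)
  have heven := colSum_colTop_even (n := n) (j := j) (by omega)
  have hunion : {x ∈ Vfin n | lexKey x < lexKey (2 * (j : ℤ), 2 * (n : ℤ) + 1)} =
      {x ∈ Vfin n | x.1 < ((2 * j : ℕ) : ℤ)} ∪ {2 * (j : ℤ)} ×ˢ Ico (2 * (j : ℤ)) (2 * n + 1) := by
    ext ⟨c, h⟩
    simp only [mem_filter, mem_union, mem_product, mem_singleton, mem_Ico, mem_Vfin, memV,
      lexKey_lt]
    omega
  rw [rankIn, hunion, card_union_of_disjoint, hcard, card_product, card_singleton, Int.card_Ico]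
  · omega
  rw [disjoint_left]
  rintro ⟨c, h⟩ h1 h2
  simp only [mem_filter, mem_product, mem_singleton] at h1 h2
  omega

lemma gaugeSign_top (n j : ℕ) :
    gaugeSign (2 * (j : ℤ), 2 * (n : ℤ) + 1) = (-1) ^ (n + j) := by
  unfold gaugeSign
  dsimp only
  split_ifs
  · rw [neg_one_pow_eq_of_parity (q := 0) (by omega), pow_zero]
  · rw [neg_one_pow_eq_of_parity (q := 1) (by omega), pow_one]

/-- Cofactor expansion: the entries of the inverse Kasteleyn matrix are ratios of Pfaffians. -/
lemma Kmat_inv_apply (hdet : IsUnit (Kmat n).det) {x y : ℤ × ℤ} (hx : x ∈ Vfin n)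
    (hy : y ∈ Vfin n) (hxy : x ≠ y) :
    (Kmat n)⁻¹ ⟨x, hx⟩ ⟨y, hy⟩ = gaugeSign x * gaugeSign y *
      (-1) ^ rankIn lexKey ((Vfin n).erase y) x * (-1) ^ rankIn lexKey ((Vfin n).erase y) y *
        (kastPf (((Vfin n).erase y).erase x) / kastPf (Vfin n)) := by
  set S := (Vfin n).erase y with hS
  have hpf := kastPf_Vfin_ne_zero n
  have hsq : ∀ r : ℕ, (-1 : ℚ) ^ r * (-1) ^ r = 1 := fun r => by
    rw [← mul_pow]; norm_num
  let F : Vfin n → ℚ := fun v => if v.1 ∈ S then gaugeSign v.1 * gaugeSign y *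
      (-1) ^ rankIn lexKey S v.1 * (-1) ^ rankIn lexKey S y *
        (kastPf (S.erase v.1) / kastPf (Vfin n)) else 0
  have hF : (Kmat n).mulVec F = Pi.single ⟨y, hy⟩ 1 := by
    ext u
    have hexp : ∑ b ∈ S, (-1) ^ rankIn lexKey S b * twist u.1 b * kastPf (S.erase b) =
        if u.1 ∈ S then 0 else (-1) ^ rankIn lexKey S u.1 * kastPf (insert u.1 S) :=
      sum_mul_pfaffian_erase lexKey twist_antisymm u.1 S
    have hrow : (Kmat n).mulVec F u = gaugeSign u.1 * gaugeSign y * (-1) ^ rankIn lexKey S y /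
        kastPf (Vfin n) *
        ∑ b ∈ S, (-1) ^ rankIn lexKey S b * twist u.1 b * kastPf (S.erase b) := by
      have hfilter : S = {b ∈ Vfin n | b ∈ S} := by
        rw [filter_mem_eq_inter, inter_eq_right.2 (erase_subset _ _)]
      rw [Matrix.mulVec, dotProduct, mul_sum,
        sum_congr hfilter fun _ _ => rfl, sum_filter, ← sum_coe_sort (Vfin n)]
      refine sum_congr rfl fun v _ => ?_
      by_cases hv : v.1 ∈ S
      · have hK : Kmat n u v = kfun u.1 v.1 - kfun v.1 u.1 := rfl
        simp only [F, if_pos hv, hK, twist]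
        linear_combination (-(kfun u.1 v.1 - kfun v.1 u.1) * (gaugeSign v.1 * gaugeSign y *
          (-1) ^ rankIn lexKey S v.1 * (-1) ^ rankIn lexKey S y *
          (kastPf (S.erase v.1) / kastPf (Vfin n)))) * gaugeSign_mul_self u.1
      · simp only [F, if_neg hv, mul_zero]
    rw [hrow, hexp]
    by_cases huy : u = ⟨y, hy⟩
    · subst huy
      have hyS : y ∉ S := notMem_erase _ _
      have hins : insert y S = Vfin n := insert_erase hy
      rw [if_neg hyS, hins, Pi.single_eq_same]
      have h1 := gaugeSign_mul_self y
      have h2 := hsq (rankIn lexKey S y)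
      field_simp
      linear_combination h1 + gaugeSign y * gaugeSign y * h2
    · have huS : u.1 ∈ S := mem_erase.2 ⟨fun h => huy (Subtype.ext h), u.2⟩
      rw [if_pos huS, mul_zero, Pi.single_eq_of_ne huy]
  have hcol : F = (Kmat n)⁻¹.mulVec (Pi.single ⟨y, hy⟩ 1) := by
    rw [← hF, Matrix.mulVec_mulVec, Matrix.nonsing_inv_mul _ hdet, Matrix.one_mulVec]
  rw [Matrix.mulVec_single_one] at hcol
  exact (congrFun hcol ⟨x, hx⟩).symm.trans (if_pos (mem_erase.2 ⟨hxy, hx⟩))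

end TopRow

/-- Let `n ≥ 1` and suppose the Kasteleyn matrix `K_n` over `ℚ` is invertible. Then for
`0 ≤ i < j ≤ n−1`, the `((2i,2n+1),(2j,2n+1))` entry of `K_n⁻¹` equals
`Z_n^{{(2i,2n+1),(2j,2n+1)}}/Z_n`; in particular it is nonnegative. -/
theorem Kinv_top_two (n : ℕ) (hn : 1 ≤ n) (hdet : IsUnit (Kmat n).det)
    (i j : ℕ) (hij : i < j) (hj : j + 1 ≤ n)
    (hx : ((2*(i:ℤ), 2*(n:ℤ)+1)) ∈ Vfin n) (hy : ((2*(j:ℤ), 2*(n:ℤ)+1)) ∈ Vfin n) :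
    (Kmat n)⁻¹ ⟨(2*(i:ℤ), 2*(n:ℤ)+1), hx⟩ ⟨(2*(j:ℤ), 2*(n:ℤ)+1), hy⟩
        = (Zpm n {(2*(i:ℤ), 2*(n:ℤ)+1), (2*(j:ℤ), 2*(n:ℤ)+1)} : ℚ) / (Zpm n ∅ : ℚ) ∧
      0 ≤ (Kmat n)⁻¹ ⟨(2*(i:ℤ), 2*(n:ℤ)+1), hx⟩ ⟨(2*(j:ℤ), 2*(n:ℤ)+1), hy⟩ := by
  set x : ℤ × ℤ := (2*(i:ℤ), 2*(n:ℤ)+1)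
  set y : ℤ × ℤ := (2*(j:ℤ), 2*(n:ℤ)+1)
  have hxy : lexKey x < lexKey y := by
    rw [lexKey_lt]; left; simp only [x, y]; omega
  have hne : x ≠ y := fun h => hxy.ne (congrArg lexKey h)
  have hrank : ∀ v, lexKey v ≤ lexKey y →
      rankIn lexKey ((Vfin n).erase y) v = rankIn lexKey (Vfin n) v := fun v hv => by
    rw [rankIn, filter_erase, erase_eq_of_notMem, rankIn]
    exact fun h => (mem_filter.1 h).2.not_ge hv
  have hZ : Zpm n ∅ = pairingCount (Gph n) (Vfin n) :=
    card_perfectMatching_induce _ _ _ fun v => by simp [Vset, mem_Vfin]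
  have hZxy : Zpm n {x, y} = pairingCount (Gph n) (((Vfin n).erase y).erase x) :=
    card_perfectMatching_induce _ _ _ fun v => by
      simp only [Set.mem_sdiff, Vset, Set.mem_ofPred_eq, Set.mem_insert_iff, Set.mem_singleton_iff,
        mem_erase, mem_Vfin]
      tauto
  have hmain : (Kmat n)⁻¹ ⟨x, hx⟩ ⟨y, hy⟩ = (Zpm n {x, y} : ℚ) / (Zpm n ∅ : ℚ) := by
    rw [Kmat_inv_apply hdet hx hy hne, hrank x hxy.le, hrank y le_rfl, kastPf_div_kastPf hij hj, hZ, hZxy,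
      gaugeSign_top n i, gaugeSign_top n j, ← pow_add, ← pow_add, ← pow_add,
      neg_one_pow_eq_of_parity (q := 0), pow_zero, one_mul]
    have h1 : (rankIn lexKey (Vfin n) x + (i + 1)) % 2 = 0 := rankIn_top (by omega)
    have h2 : (rankIn lexKey (Vfin n) y + (j + 1)) % 2 = 0 := rankIn_top hj
    omega
  exact ⟨hmain, hmain ▸ by positivity⟩
end

section
/- Let n ≥ 1. For integers m ≥ 1 define g_m^b(j) = Z_m^{{(j,j), b_m}}/Z_m ∈ ℚ for 0 ≤ j ≤ 2m−1, and g_m(i,j) = Z_m^{{(i,i),(j,j)}}/Z_m for 0 ≤ i < j ≤ 2m−1. Then for all integers 0 ≤ i < j ≤ 2n−1: if i = 0 then g_n(0,j) = 1 − g_n^b(j); if i = 1 then g_n(1,j) = (Z_{n−1}/Z_n)·g_{n−1}^b(j−2); and if i ≥ 2 then g_n(i,j) = g_{n−1}(i−2,j−2) − g_n^b(j)·g_{n−1}^b(i−2) + g_n^b(i)·g_{n−1}^b(j−2). -/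
open Finset

/-- `g_m^b(j) = Z_m^{{(j,j), b_m}} / Z_m`. -/
noncomputable def gb (m j : ℕ) : ℚ :=
  (Zpm m {((j:ℤ), (j:ℤ)), bvertex m} : ℚ) / (Zpm m ∅ : ℚ)

/-- `g_m(i,j) = Z_m^{{(i,i),(j,j)}} / Z_m`. -/
noncomputable def gfn (m i j : ℕ) : ℚ :=
  (Zpm m {((i:ℤ), (i:ℤ)), ((j:ℤ), (j:ℤ))} : ℚ) / (Zpm m ∅ : ℚ)

section Matchings

variable {α : Type*}

/-- Perfect matchings of the subgraph of `G` induced on `W`, encoded as the involutions that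
move every vertex of `W` to a neighbour and fix every vertex outside `W`. -/
def matchings (G : SimpleGraph α) (W : Set α) : Set (α → α) :=
  {σ | Function.Involutive σ ∧ (∀ v ∈ W, G.Adj v (σ v)) ∧ ∀ v ∉ W, σ v = v}

/-- The number of perfect matchings of the subgraph of `G` induced on `W`. -/
noncomputable def matchNum (G : SimpleGraph α) (W : Set α) : ℕ := (matchings G W).ncard

variable {G : SimpleGraph α} {W : Set α} {σ : α → α}

lemma map_mem_of_mem_matchings (hσ : σ ∈ matchings G W) {v : α} (hv : v ∈ W) : σ v ∈ W := by
  by_contra h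
  have h1 := hσ.2.2 _ h
  rw [hσ.1 v] at h1
  have h2 := hσ.2.1 v hv
  rw [← h1] at h2
  exact G.loopless.irrefl _ h2

lemma mem_iff_of_mem_matchings (hσ : σ ∈ matchings G W) {v : α} : v ∈ W ↔ σ v ≠ v := by
  constructor
  · intro hv h
    have := hσ.2.1 v hv
    rw [h] at this
    exact G.loopless.irrefl _ this
  · intro h
    by_contra hv
    exact h (hσ.2.2 v hv)

lemma adj_of_mem_matchings (hσ : σ ∈ matchings G W) {v : α} (hv : σ v ≠ v) : G.Adj v (σ v) :=
  hσ.2.1 v ((mem_iff_of_mem_matchings hσ).2 hv)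

lemma finite_matchings (hW : W.Finite) : (matchings G W).Finite := by
  have := hW.to_subtype
  have : Finite (W → W) := inferInstance
  refine Set.Finite.of_injOn (f := fun σ : α → α => fun v : W => σ v) (t := {f | ∀ v, f v ∈ W})
    ?_ ?_ ?_
  · intro σ hσ v
    exact map_mem_of_mem_matchings hσ v.2
  · intro σ hσ τ hτ h
    funext v
    by_cases hv : v ∈ W
    · exact congrFun h ⟨v, hv⟩
    · rw [hσ.2.2 v hv, hτ.2.2 v hv]
  · refine Set.Finite.subset (Set.Finite.pi' (fun _ : W => hW)) ?_
    intro f hf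
    exact hf

theorem card_isPerfectMatching_induce (G : SimpleGraph α) (W : Set α) :
    Nat.card {M : (G.induce W).Subgraph // M.IsPerfectMatching} = matchNum G W := by
  classical
  unfold matchNum
  rw [← Nat.card_coe_set_eq]
  symm
  refine Nat.card_eq_of_bijective (fun σ => ⟨
    { verts := Set.univ
      Adj := fun v w => σ.1 v = w
      adj_sub := ?_
      edge_vert := fun _ => Set.mem_univ _
      symm := ?_ }, ?_⟩) ⟨?_, ?_⟩
  · intro v w h
    have := σ.2.2.1 v v.2
    rw [h] at this
    exact this
  · refine ⟨fun v w h => ?_⟩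
    rw [← h, σ.2.1]
  · rw [SimpleGraph.Subgraph.isPerfectMatching_iff]
    intro v
    exact ⟨⟨σ.1 v, map_mem_of_mem_matchings σ.2 v.2⟩, rfl, fun w hw => Subtype.ext (Eq.symm hw)⟩
  · intro σ τ h
    apply Subtype.ext
    funext v
    by_cases hv : v ∈ W
    · have h1 : (σ.1 v = σ.1 v) = (τ.1 v = σ.1 v) := congrArg (fun M => M.1.Adj ⟨v, hv⟩
        ⟨σ.1 v, map_mem_of_mem_matchings σ.2 hv⟩) h
      exact (h1.mp rfl).symm
    · rw [σ.2.2.2 v hv, τ.2.2.2 v hv]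
  · rintro ⟨M, hM⟩
    rw [SimpleGraph.Subgraph.isPerfectMatching_iff] at hM
    choose f hf hu using hM
    have hff : ∀ v, f (f v) = v := fun v => (hu _ _ (hf v).symm).symm
    refine ⟨⟨fun v => if h : v ∈ W then f ⟨v, h⟩ else v, ?_, ?_, ?_⟩, ?_⟩
    · intro v
      by_cases h : v ∈ W <;> simp [h, hff]
    · intro v h
      have := M.adj_sub (hf ⟨v, h⟩)
      simpa [h] using this
    · intro v h
      simp [h]
    · apply Subtype.ext
      apply SimpleGraph.Subgraph.ext
      · ext v
        simp only [Set.mem_univ, true_iff]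
        exact M.edge_vert (hf v)
      · ext v w
        simp only [Subtype.coe_prop, dite_true, Subtype.coe_eta]
        constructor
        · intro h
          rw [← Subtype.ext h]
          exact hf v
        · intro h
          rw [hu _ _ h]

lemma matchings_congr {H : SimpleGraph α} (h : ∀ v ∈ W, ∀ w ∈ W, G.Adj v w ↔ H.Adj v w) :
    matchings G W = matchings H W := by
  ext σ
  constructor <;> intro hσ <;> refine ⟨hσ.1, fun v hv => ?_, hσ.2.2⟩
  · exact (h _ hv _ (map_mem_of_mem_matchings hσ hv)).1 (hσ.2.1 v hv)
  · exact (h _ hv _ (map_mem_of_mem_matchings hσ hv)).2 (hσ.2.1 v hv)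

lemma matchNum_preimage (e : α ≃ α) (he : ∀ v w, G.Adj (e v) (e w) ↔ G.Adj v w) :
    matchNum G (e ⁻¹' W) = matchNum G W := by
  refine Set.ncard_congr (fun σ _ => e ∘ σ ∘ e.symm) ?_ ?_ ?_
  · intro σ hσ
    refine ⟨fun v => by simp [hσ.1 _], fun v hv => ?_, fun v hv => ?_⟩
    · have := (he _ _).2 (hσ.2.1 (e.symm v) (by simpa using hv))
      simpa using this
    · simp [hσ.2.2 (e.symm v) (by simpa using hv)]
  · intro σ τ _ _ h
    funext v
    simpa using congrFun h (e v)
  · intro τ hτ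
    refine ⟨e.symm ∘ τ ∘ e, ⟨fun v => by simp [hτ.1 _], fun v hv => ?_, fun v hv => ?_⟩, ?_⟩
    · rw [← he]
      simpa using hτ.2.1 (e v) hv
    · simp [hτ.2.2 (e v) hv]
    · funext v
      simp

/-- If every perfect matching of `W` agrees on `F` with a fixed perfect matching `τ` of `F`, then
deleting `F` does not change the number of perfect matchings. -/
lemma matchNum_diff_of_forced {F : Set α} {τ : α → α} (hF : F ⊆ W) (hτ : τ ∈ matchings G F)
    (h : ∀ σ ∈ matchings G W, ∀ v ∈ F, σ v = τ v) : matchNum G W = matchNum G (W \ F) := by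
  classical
  have hτF : ∀ v, v ∈ F → τ v ∈ F := fun v => map_mem_of_mem_matchings hτ
  refine Set.ncard_congr (fun σ _ v => if v ∈ F then v else σ v) ?_ ?_ ?_
  · intro σ hσ
    have key : ∀ v, v ∉ F → σ v ∉ F := by
      intro v hv hv'
      have h1 := h σ hσ _ hv'
      rw [hσ.1] at h1
      exact hv (h1 ▸ hτF _ hv')
    refine ⟨fun v => ?_, fun v hv => ?_, fun v hv => ?_⟩
    · by_cases hv : v ∈ F
      · simp [hv]
      · simp [hv, key v hv, hσ.1 v]
    · simpa [hv.2] using hσ.2.1 v hv.1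
    · by_cases hv' : v ∈ F
      · simp [hv']
      · simpa [hv'] using hσ.2.2 v (fun h' => hv ⟨h', hv'⟩)
  · intro σ σ' hσ hσ' heq
    funext v
    by_cases hv : v ∈ F
    · rw [h σ hσ v hv, h σ' hσ' v hv]
    · simpa [hv] using congrFun heq v
  · intro σ hσ
    have key : ∀ v, v ∉ F → σ v ∉ F := by
      intro v hv hv'
      have h1 := hσ.2.2 (σ v) (fun h' => h'.2 hv')
      rw [hσ.1] at h1
      exact hv (h1 ▸ hv')
    refine ⟨fun v => if v ∈ F then τ v else σ v, ⟨fun v => ?_, fun v hv => ?_, fun v hv => ?_⟩, ?_⟩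
    · by_cases hv : v ∈ F
      · simp [hv, hτF v hv, hτ.1 v]
      · simp [hv, key v hv, hσ.1 v]
    · by_cases hv' : v ∈ F
      · simpa [hv'] using hτ.2.1 v hv'
      · simpa [hv'] using hσ.2.1 v ⟨hv, hv'⟩
    · have hv' : v ∉ F := fun h' => hv (hF h')
      simpa [hv'] using hσ.2.2 v (fun h' => hv h'.1)
    · funext v
      by_cases hv : v ∈ F
      · simp [hv, hσ.2.2 v (fun h' => h'.2 hv)]
      · simp [hv]

end Matchings

section Superposition

variable {α : Type*} {G : SimpleGraph α} {σ τ : α → α}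

/-- The vertices reachable from `a` by applying `σ` and `τ`. -/
def pairOrbit (σ τ : α → α) (a : α) : Set α :=
  {v | Relation.ReflTransGen (fun u w => w = σ u ∨ w = τ u) a v}

lemma self_mem_pairOrbit (σ τ : α → α) (a : α) : a ∈ pairOrbit σ τ a := Relation.ReflTransGen.refl

lemma pairOrbit_induction {a : α} {P : α → Prop} (ha : P a) (hσ : ∀ v, P v → P (σ v))
    (hτ : ∀ v, P v → P (τ v)) {v : α} (hv : v ∈ pairOrbit σ τ a) : P v := by
  induction hv with
  | refl => exact ha
  | tail _ h ih =>
    rcases h with rfl | rfl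
    · exact hσ _ ih
    · exact hτ _ ih

lemma pairOrbit_comm (σ τ : α → α) (a : α) : pairOrbit σ τ a = pairOrbit τ σ a := by
  simp only [pairOrbit, or_comm]

lemma map_left_mem_pairOrbit {a v : α} (hv : v ∈ pairOrbit σ τ a) : σ v ∈ pairOrbit σ τ a :=
  Relation.ReflTransGen.tail hv (Or.inl rfl)

lemma map_right_mem_pairOrbit {a v : α} (hv : v ∈ pairOrbit σ τ a) : τ v ∈ pairOrbit σ τ a :=
  Relation.ReflTransGen.tail hv (Or.inr rfl)

lemma pairOrbit_subset {a b : α} (h : b ∈ pairOrbit σ τ a) :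
    pairOrbit σ τ b ⊆ pairOrbit σ τ a :=
  fun _ hv => Relation.ReflTransGen.trans h hv

lemma pairOrbit_symm (hσ : Function.Involutive σ) (hτ : Function.Involutive τ) {a b : α}
    (h : b ∈ pairOrbit σ τ a) : a ∈ pairOrbit σ τ b := by
  refine pairOrbit_induction (P := fun v => a ∈ pairOrbit σ τ v)
    (self_mem_pairOrbit _ _ _) ?_ ?_ h
  · intro v hv
    refine pairOrbit_subset ?_ hv
    have := map_left_mem_pairOrbit (self_mem_pairOrbit σ τ (σ v))
    rwa [hσ] at this
  · intro v hv
    refine pairOrbit_subset ?_ hv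
    have := map_right_mem_pairOrbit (self_mem_pairOrbit σ τ (τ v))
    rwa [hτ] at this

/-- `σ` and `τ` are matchings (encoded as involutions) covering the same vertices, except that
the vertices of `T` are covered by exactly one of them. -/
structure Superposed (G : SimpleGraph α) (T : Set α) (σ τ : α → α) : Prop where
  invol_left : Function.Involutive σ
  invol_right : Function.Involutive τ
  adj_left : ∀ v, σ v ≠ v → G.Adj v (σ v)
  adj_right : ∀ v, τ v ≠ v → G.Adj v (τ v)
  fix_iff_of_mem : ∀ v ∈ T, (σ v = v ↔ τ v ≠ v)
  fix_iff_of_notMem : ∀ v ∉ T, (σ v = v ↔ τ v = v)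

variable {T : Set α}

lemma Superposed.symm (h : Superposed G T σ τ) : Superposed G T τ σ where
  invol_left := h.invol_right
  invol_right := h.invol_left
  adj_left := h.adj_right
  adj_right := h.adj_left
  fix_iff_of_mem v hv := by have := h.fix_iff_of_mem v hv; tauto
  fix_iff_of_notMem v hv := (h.fix_iff_of_notMem v hv).symm

/-- The walk from `a` that applies `τ` and `σ` alternately. -/
def alternatingWalk (σ τ : α → α) (a : α) : ℕ → α
  | 0 => a
  | n + 1 => if n % 2 = 0 then τ (alternatingWalk σ τ a n) else σ (alternatingWalk σ τ a n)

lemma exists_alternatingWalk_le (hσ : Function.Involutive σ) (hτ : Function.Involutive τ) {a : α}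
    (ha : σ a = a) {m : ℕ}
    (hm : alternatingWalk σ τ a (m + 1) = alternatingWalk σ τ a m) {v : α}
    (hv : v ∈ pairOrbit σ τ a) : ∃ k ≤ m, alternatingWalk σ τ a k = v := by
  have hstep : ∀ k ≤ m, (∃ l ≤ m, alternatingWalk σ τ a l = σ (alternatingWalk σ τ a k)) ∧
      ∃ l ≤ m, alternatingWalk σ τ a l = τ (alternatingWalk σ τ a k) := by
    intro k hk
    have hnext : ∃ l ≤ m, alternatingWalk σ τ a l = alternatingWalk σ τ a (k + 1) := by
      rcases hk.lt_or_eq with h | rfl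
      · exact ⟨k + 1, h, rfl⟩
      · exact ⟨k, le_rfl, hm.symm⟩
    rcases Nat.mod_two_eq_zero_or_one k with hp | hp
    · refine ⟨?_, by simpa [alternatingWalk, hp] using hnext⟩
      cases k with
      | zero => exact ⟨0, Nat.zero_le _, ha.symm⟩
      | succ l =>
        refine ⟨l, by omega, ?_⟩
        have : l % 2 ≠ 0 := by omega
        simp [alternatingWalk, this, hσ _]
    · refine ⟨by simpa [alternatingWalk, hp] using hnext, ?_⟩
      cases k with
      | zero => omega
      | succ l =>
        refine ⟨l, by omega, ?_⟩
        have : l % 2 = 0 := by omega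
        simp [alternatingWalk, this, hτ _]
  refine pairOrbit_induction (P := fun v => ∃ k ≤ m, alternatingWalk σ τ a k = v) ?_ ?_ ?_ hv
  · exact ⟨0, Nat.zero_le _, rfl⟩
  · rintro _ ⟨k, hk, rfl⟩
    exact (hstep k hk).1
  · rintro _ ⟨k, hk, rfl⟩
    exact (hstep k hk).2

lemma exists_alternatingWalk (hσ : Function.Involutive σ) (hτ : Function.Involutive τ) {a : α}
    (ha : σ a = a) {v : α} (hv : v ∈ pairOrbit σ τ a) : ∃ k, alternatingWalk σ τ a k = v := by
  have hstep : ∀ k, (∃ l, alternatingWalk σ τ a l = σ (alternatingWalk σ τ a k)) ∧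
      ∃ l, alternatingWalk σ τ a l = τ (alternatingWalk σ τ a k) := by
    intro k
    rcases Nat.mod_two_eq_zero_or_one k with hp | hp
    · refine ⟨?_, k + 1, by simp [alternatingWalk, hp]⟩
      cases k with
      | zero => exact ⟨0, ha.symm⟩
      | succ l =>
        refine ⟨l, ?_⟩
        have : l % 2 ≠ 0 := by omega
        simp [alternatingWalk, this, hσ _]
    · refine ⟨⟨k + 1, by simp [alternatingWalk, hp]⟩, ?_⟩
      cases k with
      | zero => omega
      | succ l =>
        refine ⟨l, ?_⟩
        have : l % 2 = 0 := by omega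
        simp [alternatingWalk, this, hτ _]
  refine pairOrbit_induction (P := fun v => ∃ k, alternatingWalk σ τ a k = v) ⟨0, rfl⟩ ?_ ?_ hv
  · rintro _ ⟨k, rfl⟩
    exact (hstep k).1
  · rintro _ ⟨k, rfl⟩
    exact (hstep k).2

lemma Superposed.eq_of_mem_pairOrbit_of_fixed (h : Superposed G T σ τ) {a u v : α} (haσ : σ a = a)
    (hu : u ∈ T) (hv : v ∈ T) (hua : u ≠ a) (hva : v ≠ a)
    (huO : u ∈ pairOrbit σ τ a) (hvO : v ∈ pairOrbit σ τ a) : u = v := by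
  classical
  -- a terminal first met at time `m` stops the walk there
  have key : ∀ w ∈ T, w ≠ a → w ∈ pairOrbit σ τ a →
      ∃ m, alternatingWalk σ τ a m = w ∧ (∀ k < m, alternatingWalk σ τ a k ≠ w) ∧
        alternatingWalk σ τ a (m + 1) = alternatingWalk σ τ a m := by
    intro w hw hwa hwO
    have hex := exists_alternatingWalk h.invol_left h.invol_right haσ hwO
    refine ⟨Nat.find hex, Nat.find_spec hex, fun k hk => Nat.find_min hex hk, ?_⟩
    have hm := Nat.find_spec hex
    have hmin : ∀ k < Nat.find hex, alternatingWalk σ τ a k ≠ w := fun k hk => Nat.find_min hex hk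
    generalize Nat.find hex = m at hm hmin
    cases m with
    | zero => exact absurd hm.symm hwa
    | succ l =>
      have hl := hmin l (by omega)
      have hfix := h.fix_iff_of_mem w hw
      rcases Nat.mod_two_eq_zero_or_one l with hp | hp
      · have h1 : (l + 1) % 2 ≠ 0 := by omega
        have h2 : τ (alternatingWalk σ τ a l) = w := by simpa [alternatingWalk, hp] using hm
        have h3 : τ w ≠ w := by
          intro h4
          rw [← h2, h.invol_right] at h4
          exact hl (h4.trans h2)
        rw [alternatingWalk, if_neg h1, hm]
        exact hfix.2 h3
      · have h1 : (l + 1) % 2 = 0 := by omega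
        have h2 : σ (alternatingWalk σ τ a l) = w := by simpa [alternatingWalk, hp] using hm
        have h3 : σ w ≠ w := by
          intro h4
          rw [← h2, h.invol_left] at h4
          exact hl (h4.trans h2)
        rw [alternatingWalk, if_pos h1, hm]
        tauto
  obtain ⟨m, hm, hmin, hlast⟩ := key u hu hua huO
  obtain ⟨l, hl, lmin, hlast_v⟩ := key v hv hva hvO
  obtain ⟨k, hk, hkv⟩ := exists_alternatingWalk_le h.invol_left h.invol_right haσ hlast hvO
  obtain ⟨k', hk', hku⟩ := exists_alternatingWalk_le h.invol_left h.invol_right haσ hlast_v huO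
  have h1 : l ≤ k := not_lt.1 fun h => lmin k h hkv
  have h2 : m ≤ k' := not_lt.1 fun h => hmin k' h hku
  have : l = m := by omega
  rw [← hm, ← hl, this]

/-- An orbit contains at most two terminals. -/
lemma Superposed.eq_of_mem_pairOrbit (h : Superposed G T σ τ) {a u v : α} (ha : a ∈ T)
    (hu : u ∈ T) (hv : v ∈ T) (hua : u ≠ a) (hva : v ≠ a)
    (huO : u ∈ pairOrbit σ τ a) (hvO : v ∈ pairOrbit σ τ a) : u = v := by
  by_cases haσ : σ a = a
  · exact h.eq_of_mem_pairOrbit_of_fixed haσ hu hv hua hva huO hvO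
  · have haτ : τ a = a := by have := h.fix_iff_of_mem a ha; tauto
    rw [pairOrbit_comm] at huO hvO
    exact h.symm.eq_of_mem_pairOrbit_of_fixed haτ hu hv hua hva huO hvO

/-- In a finite set closed under an involution, an even number of points is moved out of a
region `R` or fixed, up to the size of the part inside `R`. -/
lemma sum_involution_region [DecidableEq α] {ρ : α → α} (hρ : Function.Involutive ρ) (O : Finset α)
    (hO : ∀ v ∈ O, ρ v ∈ O) (R : α → Prop) [DecidablePred R] :
    ∑ v ∈ O, (if R v ∧ ρ v ≠ v then (1 : ZMod 2) else 0) =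
      ∑ v ∈ O, (if R v ∧ ¬ R (ρ v) then (1 : ZMod 2) else 0) := by
  have hsum : ∑ v ∈ O, (if R v ∧ R (ρ v) ∧ ρ v ≠ v then (1 : ZMod 2) else 0) = 0 := by
    refine Finset.sum_involution (fun v _ => ρ v) ?_ ?_ hO (fun v _ => hρ v)
    · intro v _
      have : (R v ∧ R (ρ v) ∧ ρ v ≠ v) ↔ (R (ρ v) ∧ R (ρ (ρ v)) ∧ ρ (ρ v) ≠ ρ v) := by
        rw [hρ v, ne_comm]; tauto
      rw [← if_congr this rfl rfl]
      split_ifs <;> decide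
    · intro v _ hne
      by_contra h'
      simp [h'] at hne
  rw [← sub_eq_zero, ← Finset.sum_sub_distrib, ← hsum]
  refine Finset.sum_congr rfl fun v _ => ?_
  by_cases h1 : R v <;> by_cases h2 : R (ρ v) <;> by_cases h3 : ρ v = v <;> simp_all

/-- The number of edges leaving a region within a finite union of orbits has the parity of the
number of terminals of the region. -/
lemma Superposed.sum_leaving (h : Superposed G T σ τ) (O : Finset α) (hσ : ∀ v ∈ O, σ v ∈ O)
    (hτ : ∀ v ∈ O, τ v ∈ O) (R : α → Prop) [DecidablePred R] [DecidablePred (· ∈ T)] :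
    ∑ v ∈ O, (if R v ∧ ¬ R (σ v) then (1 : ZMod 2) else 0) +
      ∑ v ∈ O, (if R v ∧ ¬ R (τ v) then (1 : ZMod 2) else 0) =
      ∑ v ∈ O, (if R v ∧ v ∈ T then (1 : ZMod 2) else 0) := by
  classical
  rw [← sum_involution_region h.invol_left O hσ, ← sum_involution_region h.invol_right O hτ,
    ← Finset.sum_add_distrib]
  refine Finset.sum_congr rfl fun v _ => ?_
  have h1 := h.fix_iff_of_mem v
  have h2 := h.fix_iff_of_notMem v
  have h3 : (1 : ZMod 2) + 1 = 0 := by decide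
  by_cases hR : R v <;> by_cases hT : v ∈ T <;> by_cases hs : σ v = v <;> by_cases ht : τ v = v <;>
    simp_all

/-- A finite orbit that contains one terminal contains another one. -/
lemma Superposed.exists_mem_pairOrbit (h : Superposed G T σ τ) {a : α} (ha : a ∈ T)
    (hfin : (pairOrbit σ τ a).Finite) : ∃ u ∈ T, u ≠ a ∧ u ∈ pairOrbit σ τ a := by
  classical
  by_contra! hno
  have hs := h.sum_leaving hfin.toFinset
    (fun v hv => by simpa using map_left_mem_pairOrbit (by simpa using hv))
    (fun v hv => by simpa using map_right_mem_pairOrbit (by simpa using hv)) (fun _ => True)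
  have hone : ∀ v ∈ hfin.toFinset, (if v ∈ T then (1 : ZMod 2) else 0) =
      if v = a then 1 else 0 := by
    intro v hv
    rw [Set.Finite.mem_toFinset] at hv
    by_cases hva : v = a
    · simp [hva, ha]
    · have : v ∉ T := fun hvT => hno v hvT hva hv
      simp [hva, this]
  have hsum : ∑ v ∈ hfin.toFinset, (if v ∈ T then (1 : ZMod 2) else 0) = 1 := by
    rw [Finset.sum_congr rfl hone, Finset.sum_ite_eq']
    simp [self_mem_pairOrbit]
  simp [hsum] at hs

end Superposition

section Condensation

open scoped symmDiff

variable {α : Type*} {G : SimpleGraph α} {W S S' : Set α}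

lemma superposed_of_mem_matchings {σ τ : α → α} (hdisj : Disjoint S S')
    (hσ : σ ∈ matchings G (W ∆ S)) (hτ : τ ∈ matchings G (W ∆ S')) :
    Superposed G (S ∪ S') σ τ where
  invol_left := hσ.1
  invol_right := hτ.1
  adj_left _ := adj_of_mem_matchings hσ
  adj_right _ := adj_of_mem_matchings hτ
  fix_iff_of_mem v hv := by
    have h1 := mem_iff_of_mem_matchings hσ (v := v)
    have h2 := mem_iff_of_mem_matchings hτ (v := v)
    have h3 : v ∈ S → v ∉ S' := fun h => Set.disjoint_left.1 hdisj h
    rw [Set.mem_symmDiff] at h1 h2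
    rw [Set.mem_union] at hv
    tauto
  fix_iff_of_notMem v hv := by
    have h1 := mem_iff_of_mem_matchings hσ (v := v)
    have h2 := mem_iff_of_mem_matchings hτ (v := v)
    rw [Set.mem_symmDiff] at h1 h2
    rw [Set.mem_union] at hv
    tauto

open Classical in
/-- Exchange `σ` and `τ` on the orbit of `a`. -/
noncomputable def orbitSwap (a : α) (p : (α → α) × (α → α)) : (α → α) × (α → α) :=
  (fun v => if v ∈ pairOrbit p.1 p.2 a then p.2 v else p.1 v,
    fun v => if v ∈ pairOrbit p.1 p.2 a then p.1 v else p.2 v)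

lemma pairOrbit_orbitSwap (a b : α) (p : (α → α) × (α → α)) :
    pairOrbit (orbitSwap a p).1 (orbitSwap a p).2 b = pairOrbit p.1 p.2 b := by
  have : (fun u w => w = (orbitSwap a p).1 u ∨ w = (orbitSwap a p).2 u) =
      fun u w => w = p.1 u ∨ w = p.2 u := by
    funext u w
    by_cases h : u ∈ pairOrbit p.1 p.2 a <;> simp [orbitSwap, h, or_comm]
  simp only [pairOrbit, this]

lemma orbitSwap_involutive (a : α) : Function.Involutive (orbitSwap a) := by
  intro p
  have h := pairOrbit_orbitSwap a a p
  apply Prod.ext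
  · funext v
    rw [orbitSwap, h]
    by_cases hv : v ∈ pairOrbit p.1 p.2 a <;> simp [hv, orbitSwap]
  · funext v
    rw [orbitSwap, h]
    by_cases hv : v ∈ pairOrbit p.1 p.2 a <;> simp [hv, orbitSwap]

lemma orbitSwap_mem_matchings {A B : Set α} {a : α} {p : (α → α) × (α → α)}
    (h1 : p.1 ∈ matchings G A) (h2 : p.2 ∈ matchings G B) :
    (orbitSwap a p).1 ∈ matchings G (Set.ite (pairOrbit p.1 p.2 a) B A) ∧
      (orbitSwap a p).2 ∈ matchings G (Set.ite (pairOrbit p.1 p.2 a) A B) := by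
  have hl : ∀ v, p.1 v ∈ pairOrbit p.1 p.2 a ↔ v ∈ pairOrbit p.1 p.2 a := fun v =>
    ⟨fun h => by have := map_left_mem_pairOrbit h; rwa [h1.1] at this, map_left_mem_pairOrbit⟩
  have hr : ∀ v, p.2 v ∈ pairOrbit p.1 p.2 a ↔ v ∈ pairOrbit p.1 p.2 a := fun v =>
    ⟨fun h => by have := map_right_mem_pairOrbit h; rwa [h2.1] at this, map_right_mem_pairOrbit⟩
  refine ⟨⟨fun v => ?_, fun v hv => ?_, fun v hv => ?_⟩,
    ⟨fun v => ?_, fun v hv => ?_, fun v hv => ?_⟩⟩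
  all_goals
    have e1 := h1.1 v
    have e2 := h2.1 v
    have a1 := h1.2.1 v
    have a2 := h2.2.1 v
    have f1 := h1.2.2 v
    have f2 := h2.2.2 v
    by_cases hO : v ∈ pairOrbit p.1 p.2 a <;> simp_all [orbitSwap, Set.ite]

/-- Pairs of matchings of `W ∆ S` and `W ∆ S'` whose orbit through `a` contains `x`. -/
def linkedPairs (G : SimpleGraph α) (W : Set α) (a x : α) (S S' : Set α) :
    Set ((α → α) × (α → α)) :=
  {p | p.1 ∈ matchings G (W ∆ S) ∧ p.2 ∈ matchings G (W ∆ S') ∧ x ∈ pairOrbit p.1 p.2 a}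

lemma finite_linkedPairs (hW : W.Finite) (hS : S.Finite) (hS' : S'.Finite) (a x : α) :
    (linkedPairs G W a x S S').Finite :=
  ((finite_matchings (hW.symmDiff hS)).prod (finite_matchings (hW.symmDiff hS'))).subset
    fun _ hp => ⟨hp.1, hp.2.1⟩

lemma ncard_linkedPairs_comm (a x : α) (S S' : Set α) :
    (linkedPairs G W a x S S').ncard = (linkedPairs G W a x S' S).ncard := by
  refine Set.ncard_congr (fun p _ => p.swap) ?_ ?_ ?_
  · rintro ⟨σ, τ⟩ ⟨h1, h2, h3⟩
    exact ⟨h2, h1, by rwa [pairOrbit_comm] at h3⟩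
  · intro p q _ _ h
    exact Prod.swap_injective h
  · rintro ⟨σ, τ⟩ ⟨h1, h2, h3⟩
    exact ⟨(τ, σ), ⟨h2, h1, by rwa [pairOrbit_comm] at h3⟩, rfl⟩

lemma symmDiff_pair_eq_ite {O : Set α} {a x : α} (hdisj : Disjoint S S') (ha : a ∈ S ∪ S')
    (hx : x ∈ S ∪ S') (hO : ∀ v ∈ S ∪ S', v ∈ O ↔ v = a ∨ v = x) :
    W ∆ (S ∆ {a, x}) = Set.ite O (W ∆ S') (W ∆ S) := by
  ext v
  have h1 := hO v
  have h2 : v ∈ S → v ∉ S' := fun h => Set.disjoint_left.1 hdisj h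
  have h3 : v = a → v ∈ S ∪ S' := by rintro rfl; exact ha
  have h4 : v = x → v ∈ S ∪ S' := by rintro rfl; exact hx
  simp only [Set.mem_symmDiff, Set.ite, Set.mem_union, Set.mem_inter_iff, Set.mem_sdiff,
    Set.mem_insert_iff, Set.mem_singleton_iff] at *
  clear hO ha hx hdisj
  by_cases hW : v ∈ W <;> by_cases hS : v ∈ S <;> by_cases hS' : v ∈ S' <;>
    simp only [hW, hS, hS'] at * <;> grind

lemma orbitSwap_mem_linkedPairs {a x : α} (hdisj : Disjoint S S') (ha : a ∈ S ∪ S')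
    (hx : x ∈ S ∪ S') (hxa : x ≠ a) {p : (α → α) × (α → α)}
    (hp : p ∈ linkedPairs G W a x S S') :
    orbitSwap a p ∈ linkedPairs G W a x (S ∆ {a, x}) (S' ∆ {a, x}) := by
  obtain ⟨h1, h2, h3⟩ := hp
  have hsup := superposed_of_mem_matchings hdisj h1 h2
  have hO : ∀ v ∈ S ∪ S', v ∈ pairOrbit p.1 p.2 a ↔ v = a ∨ v = x := by
    intro v hv
    constructor
    · intro h
      by_cases hva : v = a
      · exact Or.inl hva
      · exact Or.inr (hsup.eq_of_mem_pairOrbit ha hv hx hva hxa h h3)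
    · rintro (rfl | rfl)
      · exact self_mem_pairOrbit _ _ _
      · exact h3
  have hm := orbitSwap_mem_matchings (a := a) h1 h2
  refine ⟨?_, ?_, by rwa [pairOrbit_orbitSwap]⟩
  · rw [symmDiff_pair_eq_ite hdisj ha hx hO]
    exact hm.1
  · rw [symmDiff_pair_eq_ite hdisj.symm (Set.union_comm S S' ▸ ha) (Set.union_comm S S' ▸ hx)
      (Set.union_comm S S' ▸ hO)]
    exact hm.2

lemma ncard_linkedPairs_symmDiff (hW : W.Finite) (hS : S.Finite) (hS' : S'.Finite) {a x : α}
    (hdisj : Disjoint S S') (ha : a ∈ S ∪ S') (hx : x ∈ S ∪ S') (hxa : x ≠ a) :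
    (linkedPairs G W a x S S').ncard =
      (linkedPairs G W a x (S ∆ {a, x}) (S' ∆ {a, x})).ncard := by
  have hfin : ({a, x} : Set α).Finite := Set.toFinite _
  have hd : ∀ v, v ∈ S → v ∉ S' := fun _ h => Set.disjoint_left.1 hdisj h
  apply le_antisymm
  · exact Set.ncard_le_ncard_of_injOn (orbitSwap a)
      (fun p hp => orbitSwap_mem_linkedPairs hdisj ha hx hxa hp)
      (orbitSwap_involutive a).injective.injOn
      (finite_linkedPairs hW (hS.symmDiff hfin) (hS'.symmDiff hfin) a x)
  · refine Set.ncard_le_ncard_of_injOn (orbitSwap a) (fun p hp => ?_)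
      (orbitSwap_involutive a).injective.injOn (finite_linkedPairs hW hS hS' a x)
    have := orbitSwap_mem_linkedPairs (S := S ∆ {a, x}) (S' := S' ∆ {a, x}) ?_ ?_ ?_ hxa hp
    · simpa only [symmDiff_assoc, symmDiff_self, symmDiff_bot] using this
    · rw [Set.disjoint_left]
      intro v
      have := hd v
      have : v = a → v ∈ S ∪ S' := by rintro rfl; exact ha
      have : v = x → v ∈ S ∪ S' := by rintro rfl; exact hx
      simp only [Set.mem_symmDiff, Set.mem_union, Set.mem_insert_iff, Set.mem_singleton_iff] at *
      tauto
    all_goals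
      have := hd a
      have := hd x
      simp only [Set.mem_symmDiff, Set.mem_union, Set.mem_insert_iff, Set.mem_singleton_iff] at *
      tauto

lemma finite_pairOrbit (hW : W.Finite) (hS : S.Finite) (hS' : S'.Finite) {σ τ : α → α} {a : α}
    (hσ : σ ∈ matchings G (W ∆ S)) (hτ : τ ∈ matchings G (W ∆ S')) (ha : a ∈ S ∪ S') :
    (pairOrbit σ τ a).Finite := by
  refine ((hW.union hS).union hS').subset fun v hv => ?_
  refine pairOrbit_induction (P := fun v => v ∈ W ∪ S ∪ S') ?_ ?_ ?_ hv
  · rw [Set.mem_union] at *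
    rcases ha with h | h
    · exact Or.inl (Or.inr h)
    · exact Or.inr h
  · intro v hv
    by_cases h : v ∈ W ∆ S
    · have := map_mem_of_mem_matchings hσ h
      rw [Set.mem_symmDiff] at this
      simp only [Set.mem_union]
      tauto
    · rwa [hσ.2.2 v h]
  · intro v hv
    by_cases h : v ∈ W ∆ S'
    · have := map_mem_of_mem_matchings hτ h
      rw [Set.mem_symmDiff] at this
      simp only [Set.mem_union]
      tauto
    · rwa [hτ.2.2 v h]

/-- `G` has no superposition with terminals `a, b, c, d` in which one orbit joins `a` to `c` and a
disjoint one joins `b` to `d`. -/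
def NoCrossing (G : SimpleGraph α) (a b c d : α) : Prop :=
  ∀ σ τ, Superposed G {a, b, c, d} σ τ → (pairOrbit σ τ a).Finite → c ∈ pairOrbit σ τ a →
    b ∉ pairOrbit σ τ a → d ∉ pairOrbit σ τ a → d ∉ pairOrbit σ τ b

lemma matchNum_mul_matchNum {a b c d : α} (hW : W.Finite) (hab : a ≠ b) (hac : a ≠ c) (had : a ≠ d)
    (hbc : b ≠ c) (hbd : b ≠ d) (hcd : c ≠ d) (hplanar : NoCrossing G a b c d)
    (hdisj : Disjoint S S') (hunion : S ∪ S' = {a, b, c, d}) :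
    matchNum G (W ∆ S) * matchNum G (W ∆ S') =
      (linkedPairs G W a b S S').ncard + (linkedPairs G W a d S S').ncard := by
  have hT : (S ∪ S').Finite := by rw [hunion]; exact Set.toFinite _
  have hS := hT.subset Set.subset_union_left
  have hS' := hT.subset Set.subset_union_right
  unfold matchNum
  rw [← Set.ncard_prod, ← Set.ncard_union_eq ?_ (finite_linkedPairs hW hS hS' a b)
    (finite_linkedPairs hW hS hS' a d)]
  · congr 1
    ext p
    constructor
    · rintro ⟨h1, h2⟩
      have hsup := superposed_of_mem_matchings hdisj h1 h2
      have haT : a ∈ S ∪ S' := by simp [hunion]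
      have hbT : b ∈ S ∪ S' := by simp [hunion]
      have hcT : c ∈ S ∪ S' := by simp [hunion]
      have hdT : d ∈ S ∪ S' := by simp [hunion]
      have hfa := finite_pairOrbit hW hS hS' h1 h2 haT
      by_cases hb : b ∈ pairOrbit p.1 p.2 a
      · exact Or.inl ⟨h1, h2, hb⟩
      by_cases hd : d ∈ pairOrbit p.1 p.2 a
      · exact Or.inr ⟨h1, h2, hd⟩
      exfalso
      have hc : c ∈ pairOrbit p.1 p.2 a := by
        obtain ⟨u, hu, hua, huO⟩ := hsup.exists_mem_pairOrbit haT hfa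
        rw [hunion] at hu
        rcases hu with rfl | rfl | rfl | rfl
        · exact absurd rfl hua
        · exact absurd huO hb
        · exact huO
        · exact absurd huO hd
      have hd' : d ∈ pairOrbit p.1 p.2 b := by
        obtain ⟨u, hu, hub, huO⟩ := hsup.exists_mem_pairOrbit hbT
          (finite_pairOrbit hW hS hS' h1 h2 hbT)
        have hback := pairOrbit_symm h1.1 h2.1 huO
        rw [hunion] at hu
        rcases hu with rfl | rfl | rfl | rfl
        · exact absurd hback hb
        · exact absurd rfl hub
        · exact absurd (pairOrbit_subset hc hback) hb
        · exact huO
      exact hplanar _ _ (hunion ▸ hsup) hfa hc hb hd hd'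
    · rintro (h | h) <;> exact ⟨h.1, h.2.1⟩
  · rw [Set.disjoint_left]
    rintro p ⟨h1, h2, hb⟩ ⟨-, -, hd⟩
    have hsup := superposed_of_mem_matchings hdisj h1 h2
    rw [hunion] at hsup
    exact hbd (hsup.eq_of_mem_pairOrbit (by simp) (by simp) (by simp) hab.symm had.symm hb hd)

/-- Graphical condensation for four terminals in cyclic order on the outer face. -/
theorem condensation {a b c d : α} (hW : W.Finite) (hab : a ≠ b) (hac : a ≠ c) (had : a ≠ d)
    (hbc : b ≠ c) (hbd : b ≠ d) (hcd : c ≠ d) (hplanar : NoCrossing G a b c d) :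
    matchNum G W * matchNum G (W ∆ {a, b, c, d}) +
        matchNum G (W ∆ {a, c}) * matchNum G (W ∆ {b, d}) =
      matchNum G (W ∆ {a, b}) * matchNum G (W ∆ {c, d}) +
        matchNum G (W ∆ {a, d}) * matchNum G (W ∆ {b, c}) := by
  have hmul := fun {S S' : Set α} => matchNum_mul_matchNum (G := G) (S := S) (S' := S') hW hab hac
    had hbc hbd hcd hplanar
  have d1 : Disjoint (∅ : Set α) {a, b, c, d} := by simp
  have d2 : Disjoint ({a, c} : Set α) {b, d} := by simp; grind
  have d3 : Disjoint ({a, b} : Set α) {c, d} := by simp; grind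
  have d4 : Disjoint ({a, d} : Set α) {b, c} := by simp; grind
  have u1 : (∅ : Set α) ∪ {a, b, c, d} = {a, b, c, d} := by simp
  have u2 : ({a, c} : Set α) ∪ {b, d} = {a, b, c, d} := by ext; simp; tauto
  have u3 : ({a, b} : Set α) ∪ {c, d} = {a, b, c, d} := by ext; simp; tauto
  have u4 : ({a, d} : Set α) ∪ {b, c} = {a, b, c, d} := by ext; simp; tauto
  have hswap := fun {S S' : Set α} {x : α} (hd : Disjoint S S')
      (hu : S ∪ S' = {a, b, c, d}) =>
    ncard_linkedPairs_symmDiff (G := G) (W := W) (S := S) (S' := S') (a := a) (x := x) hW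
      (Set.Finite.subset (Set.toFinite {a, b, c, d}) (hu ▸ Set.subset_union_left))
      (Set.Finite.subset (Set.toFinite {a, b, c, d}) (hu ▸ Set.subset_union_right)) hd
      (by simp [hu])
  have e1 := hswap d1 u1 (x := b) (by simp) hab.symm
  have e2 := hswap d1 u1 (x := d) (by simp) had.symm
  have e3 := hswap d2 u2 (x := b) (by simp) hab.symm
  have e4 := hswap d2 u2 (x := d) (by simp) had.symm
  have s1 : ({a, b, c, d} : Set α) ∆ {a, b} = {c, d} := by
    ext v; simp [Set.mem_symmDiff]; grind
  have s2 : ({a, b, c, d} : Set α) ∆ {a, d} = {b, c} := by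
    ext v; simp [Set.mem_symmDiff]; grind
  have s3 : ({a, c} : Set α) ∆ {a, b} = {b, c} := by
    ext v; simp [Set.mem_symmDiff]; grind
  have s4 : ({b, d} : Set α) ∆ {a, b} = {a, d} := by
    ext v; simp [Set.mem_symmDiff]; grind
  have s5 : ({a, c} : Set α) ∆ {a, d} = {c, d} := by
    ext v; simp [Set.mem_symmDiff]; grind
  have s6 : ({b, d} : Set α) ∆ {a, d} = {a, b} := by
    ext v; simp [Set.mem_symmDiff]; grind
  have s7 : ∀ S : Set α, (∅ : Set α) ∆ S = S := fun S => bot_symmDiff S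
  have s8 : W ∆ (∅ : Set α) = W := symmDiff_bot W
  rw [s7, s1] at e1
  rw [s7, s2] at e2
  rw [s3, s4, ncard_linkedPairs_comm] at e3
  rw [s5, s6, ncard_linkedPairs_comm] at e4
  have m1 := hmul d1 u1
  rw [s8] at m1
  rw [m1, hmul d2 u2, hmul d3 u3, hmul d4 u4, e1, e2, ncard_linkedPairs_comm a b {a, c},
    ncard_linkedPairs_comm a d {a, c}, e3, e4, ncard_linkedPairs_comm a b {b, c},
    ncard_linkedPairs_comm a d {c, d}]
  ring

end Condensation

section Honeycomb

/-- Edge relation of the half-plane honeycomb graph with its boundary diagonal; `x` is the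
lower-left endpoint. -/
def honeyRel (x y : ℤ × ℤ) : Prop :=
  (y.1 = x.1 + 1 ∧ y.2 = x.2 ∧ x.1 ≤ x.2 ∧ (x.1 + x.2) % 2 = 1) ∨
  (y.1 = x.1 ∧ y.2 = x.2 + 1 ∧ x.1 ≤ x.2) ∨
  (x.1 = x.2 ∧ y.1 = x.1 + 1 ∧ y.2 = x.2 + 1)

/-- The infinite graph containing every `G_n` as an induced subgraph. -/
def honeyGraph : SimpleGraph (ℤ × ℤ) where
  Adj x y := honeyRel x y ∨ honeyRel y x
  symm := ⟨fun _ _ h => Or.symm h⟩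
  loopless := by
    constructor
    rintro ⟨x1, x2⟩ h
    simp only [honeyRel] at h
    omega

/-- The diagonal vertex `(k, k)`. -/
def diagVertex (k : ℤ) : ℤ × ℤ := (k, k)

lemma honeyGraph_adj (x1 x2 y1 y2 : ℤ) : honeyGraph.Adj (x1, x2) (y1, y2) ↔
    ((y1 = x1 + 1 ∧ y2 = x2 ∧ x1 ≤ x2 ∧ (x1 + x2) % 2 = 1) ∨
      (y1 = x1 ∧ y2 = x2 + 1 ∧ x1 ≤ x2) ∨ (x1 = x2 ∧ y1 = x1 + 1 ∧ y2 = x2 + 1)) ∨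
    ((x1 = y1 + 1 ∧ x2 = y2 ∧ y1 ≤ y2 ∧ (y1 + y2) % 2 = 1) ∨
      (x1 = y1 ∧ x2 = y2 + 1 ∧ y1 ≤ y2) ∨ (y1 = y2 ∧ x1 = y1 + 1 ∧ x2 = y2 + 1)) := Iff.rfl

/-- The number, modulo 2, of edges of `ρ` inside `O` that leave the column `x` to the right
strictly above height `y`. -/
def crossings (ρ : ℤ × ℤ → ℤ × ℤ) (O : Finset (ℤ × ℤ)) (x y : ℤ) : ZMod 2 :=
  ∑ u ∈ O, if u.1 = x ∧ y < u.2 ∧ (ρ u).1 = x + 1 then 1 else 0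

variable {ρ σ τ : ℤ × ℤ → ℤ × ℤ} {O : Finset (ℤ × ℤ)}

lemma crossings_up (x y : ℤ) (h : (x, y + 1) ∈ O → (ρ (x, y + 1)).1 ≠ x + 1) :
    crossings ρ O x y = crossings ρ O x (y + 1) := by
  refine Finset.sum_congr rfl ?_
  rintro ⟨u1, u2⟩ hu
  refine if_congr ⟨fun ⟨h1, h2, h3⟩ => ⟨h1, ?_, h3⟩, fun ⟨h1, h2, h3⟩ => ⟨h1, by omega, h3⟩⟩ rfl rfl
  by_contra h4
  have h5 : u2 = y + 1 := by simp only at h2 h4; omega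
  simp only at h1
  subst h1 h5
  exact h hu h3

/-- Edges of `ρ` leaving a half-column go left or right. -/
lemma sum_leaving_halfColumn (hρ : Function.Involutive ρ)
    (hadj : ∀ v, ρ v ≠ v → honeyGraph.Adj v (ρ v)) (hO : ∀ v ∈ O, ρ v ∈ O) (x y : ℤ)
    (hxy : x + 1 ≤ y) (hv : (x + 1, y) ∉ O) :
    ∑ v ∈ O, (if (v.1 = x + 1 ∧ y < v.2) ∧ ¬ ((ρ v).1 = x + 1 ∧ y < (ρ v).2) then (1 : ZMod 2)
      else 0) = crossings ρ O x y + crossings ρ O (x + 1) y := by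
  have hleft : crossings ρ O x y =
      ∑ v ∈ O, if v.1 = x + 1 ∧ y < v.2 ∧ (ρ v).1 = x then 1 else 0 := by
    refine Finset.sum_nbij' ρ ρ hO hO (fun v _ => hρ v) (fun v _ => hρ v) ?_
    rintro ⟨u1, u2⟩ hu
    rw [hρ]
    have h1 := hadj (u1, u2)
    rcases hw : ρ (u1, u2) with ⟨w1, w2⟩
    rw [hw, honeyGraph_adj] at h1
    refine if_congr ?_ rfl rfl
    simp only [ne_eq, Prod.mk.injEq] at h1 ⊢
    omega
  rw [hleft, crossings, ← Finset.sum_add_distrib]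
  refine Finset.sum_congr rfl ?_
  rintro ⟨u1, u2⟩ hu
  have h1 := hadj (u1, u2)
  have h2 : ρ (u1, u2) ≠ (x + 1, y) := fun h => hv (h ▸ hO _ hu)
  rcases hw : ρ (u1, u2) with ⟨w1, w2⟩
  rw [hw, honeyGraph_adj] at h1
  rw [hw] at h2
  simp only [ne_eq, Prod.mk.injEq] at h1 h2 ⊢
  by_cases c1 : u1 = x + 1 ∧ y < u2
  · by_cases c2 : w1 = x
    · have c3 : ¬ w1 = x + 1 + 1 := by omega
      have c4 : ¬ w1 = x + 1 := by omega
      rw [if_pos ⟨c1, fun h => c4 h.1⟩, if_pos ⟨c1.1, c1.2, c2⟩,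
        if_neg (fun h => c3 h.2.2), add_zero]
    · by_cases c3 : w1 = x + 1 + 1
      · have c4 : ¬ w1 = x + 1 := by omega
        simp [c1, c3]
        omega
      · have c4 : w1 = x + 1 ∧ y < w2 := by omega
        simp [c1, c4]
  · have c2 : ¬ (u1 = x + 1 ∧ y < u2 ∧ w1 = x) := by omega
    have c3 : ¬ (u1 = x + 1 ∧ y < u2 ∧ w1 = x + 1 + 1) := by omega
    simp [c1, c2, c3]

variable {T : Set (ℤ × ℤ)}

lemma crossings_right (h : Superposed honeyGraph T σ τ) (hT : ∀ v ∈ T, v.1 = v.2)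
    (hσ : ∀ v ∈ O, σ v ∈ O) (hτ : ∀ v ∈ O, τ v ∈ O) (x y : ℤ) (hxy : x + 1 ≤ y)
    (hv : (x + 1, y) ∉ O) :
    crossings σ O x y + crossings τ O x y = crossings σ O (x + 1) y + crossings τ O (x + 1) y := by
  classical
  have h1 := sum_leaving_halfColumn h.invol_left h.adj_left hσ x y hxy hv
  have h2 := sum_leaving_halfColumn h.invol_right h.adj_right hτ x y hxy hv
  have h3 := h.sum_leaving O hσ hτ (fun v => v.1 = x + 1 ∧ y < v.2)
  have h4 : ∀ v ∈ O, (if (v.1 = x + 1 ∧ y < v.2) ∧ v ∈ T then (1 : ZMod 2) else 0) = 0 := by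
    intro v _
    rw [if_neg]
    rintro ⟨⟨h5, h6⟩, h7⟩
    have := hT v h7
    omega
  have h5 : crossings σ O x y + crossings σ O (x + 1) y +
      (crossings τ O x y + crossings τ O (x + 1) y) = 0 := by
    rw [← h1, ← h2]
    exact h3.trans (Finset.sum_eq_zero h4)
  generalize crossings σ O x y = p at *
  generalize crossings σ O (x + 1) y = q at *
  generalize crossings τ O x y = r at *
  generalize crossings τ O (x + 1) y = s at *
  clear h1 h2 h3 h4
  revert p q r s
  decide

/-- The crossing parity is the same at adjacent vertices outside `O`. -/
lemma crossings_eq_of_honeyRel (h : Superposed honeyGraph T σ τ) (hT : ∀ v ∈ T, v.1 = v.2)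
    (hσ : ∀ v ∈ O, σ v ∈ O) (hτ : ∀ v ∈ O, τ v ∈ O) {v w : ℤ × ℤ} (hw : w ∉ O)
    (hvw : honeyRel v w) :
    crossings σ O v.1 v.2 + crossings τ O v.1 v.2 =
      crossings σ O w.1 w.2 + crossings τ O w.1 w.2 := by
  obtain ⟨x, y⟩ := v
  obtain ⟨x', y'⟩ := w
  simp only [honeyRel] at hvw
  rcases hvw with ⟨rfl, rfl, h1, h2⟩ | ⟨rfl, rfl, h1⟩ | ⟨rfl, rfl, rfl⟩
  · exact crossings_right h hT hσ hτ x y' (by omega) hw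
  · simp only
    rw [crossings_up _ _ (fun h' => absurd h' hw), crossings_up _ _ (fun h' => absurd h' hw)]
  · have key : ∀ ρ : ℤ × ℤ → ℤ × ℤ, (∀ v, ρ v ≠ v → honeyGraph.Adj v (ρ v)) →
        (∀ v ∈ O, ρ v ∈ O) → (x, x + 1) ∈ O → (ρ (x, x + 1)).1 ≠ x + 1 := by
      intro ρ hρ hO hmem h1
      have h2 := hρ (x, x + 1)
      have h3 := hO _ hmem
      rcases hw' : ρ (x, x + 1) with ⟨w1, w2⟩
      rw [hw'] at h1 h2 h3
      simp only [honeyGraph_adj, ne_eq, Prod.mk.injEq] at h1 h2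
      have h4 : w2 = x + 1 := by omega
      rw [h1, h4] at h3
      exact hw h3
    simp only
    rw [crossings_up _ _ (key σ h.adj_left hσ), crossings_up _ _ (key τ h.adj_right hτ)]
    exact crossings_right h hT hσ hτ x (x + 1) le_rfl hw

lemma sum_leaving_columns (hadj : ∀ v, ρ v ≠ v → honeyGraph.Adj v (ρ v)) (k : ℤ)
    (hk : diagVertex k ∉ O) :
    ∑ v ∈ O, (if v.1 ≤ k ∧ ¬ (ρ v).1 ≤ k then (1 : ZMod 2) else 0) = crossings ρ O k k := by
  refine Finset.sum_congr rfl ?_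
  rintro ⟨u1, u2⟩ hu
  have h1 := hadj (u1, u2)
  have h2 : ¬ (u1 = k ∧ u2 = k) := by
    rintro ⟨rfl, rfl⟩
    exact hk hu
  rcases hw : ρ (u1, u2) with ⟨w1, w2⟩
  rw [hw] at h1
  refine if_congr ?_ rfl rfl
  simp only [honeyGraph_adj, ne_eq, Prod.mk.injEq] at h1 ⊢
  omega

lemma crossings_diag [DecidablePred (· ∈ T)] (h : Superposed honeyGraph T σ τ)
    (hσ : ∀ v ∈ O, σ v ∈ O)
    (hτ : ∀ v ∈ O, τ v ∈ O) (k : ℤ) (hk : diagVertex k ∉ O) :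
    crossings σ O k k + crossings τ O k k =
      ∑ v ∈ O, (if v.1 ≤ k ∧ v ∈ T then (1 : ZMod 2) else 0) := by
  rw [← sum_leaving_columns h.adj_left k hk, ← sum_leaving_columns h.adj_right k hk]
  exact h.sum_leaving O hσ hτ (fun v => v.1 ≤ k)

theorem noCrossing_honeyGraph {a b c d : ℤ} (hab : a < b) (hbc : b < c) (hcd : c < d) :
    NoCrossing honeyGraph (diagVertex a) (diagVertex b) (diagVertex c) (diagVertex d) := by
  classical
  intro σ τ h hfin hc hb hd hbd
  set O := hfin.toFinset with hO
  have hmem : ∀ v, v ∈ O ↔ v ∈ pairOrbit σ τ (diagVertex a) := fun v => by simp [hO]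
  have hσ : ∀ v ∈ O, σ v ∈ O := fun v hv => (hmem _).2 (map_left_mem_pairOrbit ((hmem _).1 hv))
  have hτ : ∀ v ∈ O, τ v ∈ O := fun v hv => (hmem _).2 (map_right_mem_pairOrbit ((hmem _).1 hv))
  have hσ' : ∀ v, v ∉ O → σ v ∉ O := fun v hv hv' => hv (h.invol_left v ▸ hσ _ hv')
  have hτ' : ∀ v, v ∉ O → τ v ∉ O := fun v hv hv' => hv (h.invol_right v ▸ hτ _ hv')
  have hT : ∀ v ∈ ({diagVertex a, diagVertex b, diagVertex c, diagVertex d} : Set (ℤ × ℤ)),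
      v.1 = v.2 := by
    rintro v (rfl | rfl | rfl | rfl) <;> rfl
  have hstep : ∀ ρ : ℤ × ℤ → ℤ × ℤ, (∀ v, ρ v ≠ v → honeyGraph.Adj v (ρ v)) → ∀ v, v ∉ O →
      ρ v ∉ O → crossings σ O v.1 v.2 + crossings τ O v.1 v.2 =
        crossings σ O (ρ v).1 (ρ v).2 + crossings τ O (ρ v).1 (ρ v).2 := by
    intro ρ hρ v hv hρv
    by_cases hfix : ρ v = v
    · rw [hfix]
    · rcases hρ v hfix with h' | h'
      · exact crossings_eq_of_honeyRel h hT hσ hτ hρv h'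
      · exact (crossings_eq_of_honeyRel h hT hσ hτ hv h').symm
  have hconst := pairOrbit_induction (P := fun v => v ∉ O ∧
      crossings σ O b b + crossings τ O b b = crossings σ O v.1 v.2 + crossings τ O v.1 v.2)
    ⟨fun h' => hb ((hmem _).1 h'), rfl⟩
    (fun v hv => ⟨hσ' v hv.1, hv.2.trans (hstep σ h.adj_left v hv.1 (hσ' v hv.1))⟩)
    (fun v hv => ⟨hτ' v hv.1, hv.2.trans (hstep τ h.adj_right v hv.1 (hτ' v hv.1))⟩) hbd
  have hcount : ∀ k, (∑ v ∈ O, if v.1 ≤ k ∧ v ∈ ({diagVertex a, diagVertex b, diagVertex c,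
      diagVertex d} : Set (ℤ × ℤ)) then (1 : ZMod 2) else 0) =
        (if a ≤ k then 1 else 0) + if c ≤ k then 1 else 0 := by
    intro k
    have hterm : ∀ v ∈ O, (if v.1 ≤ k ∧ v ∈ ({diagVertex a, diagVertex b, diagVertex c,
        diagVertex d} : Set (ℤ × ℤ)) then (1 : ZMod 2) else 0) =
        (if v = diagVertex a then (if a ≤ k then 1 else 0) else 0) +
          if v = diagVertex c then (if c ≤ k then 1 else 0) else 0 := by
      intro v hv
      have hvb : v ≠ diagVertex b := by rintro rfl; exact hb ((hmem _).1 hv)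
      have hvd : v ≠ diagVertex d := by rintro rfl; exact hd ((hmem _).1 hv)
      have hac : diagVertex a ≠ diagVertex c := by
        simp only [diagVertex, ne_eq, Prod.mk.injEq]; omega
      by_cases hva : v = diagVertex a
      · subst hva
        simp [hac]
        rfl
      · by_cases hvc : v = diagVertex c
        · subst hvc
          simp [hac.symm]
          rfl
        · simp [hva, hvb, hvc, hvd]
    rw [Finset.sum_congr rfl hterm, Finset.sum_add_distrib, Finset.sum_ite_eq', Finset.sum_ite_eq',
      if_pos ((hmem _).2 (self_mem_pairOrbit _ _ _)), if_pos ((hmem _).2 hc)]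
  have hd' : diagVertex d ∉ O := hconst.1
  have hb' : diagVertex b ∉ O := fun h' => hb ((hmem _).1 h')
  have := hconst.2
  simp only [diagVertex] at this
  rw [crossings_diag h hσ hτ b hb', crossings_diag h hσ hτ d hd', hcount, hcount, if_pos hab.le,
    if_neg (by omega), if_pos (by omega), if_pos hcd.le] at this
  revert this
  decide

end Honeycomb

section Strip

/-- The vertex `(k, k + 1)`. -/
def upperVertex (k : ℤ) : ℤ × ℤ := (k, k + 1)

lemma diagVertex_inj {k l : ℤ} : diagVertex k = diagVertex l ↔ k = l := by
  simp [diagVertex]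

lemma upperVertex_inj {k l : ℤ} : upperVertex k = upperVertex l ↔ k = l := by
  simp [upperVertex]

lemma diagVertex_ne_upperVertex (k l : ℤ) : diagVertex k ≠ upperVertex l := by
  simp only [diagVertex, upperVertex, ne_eq, Prod.mk.injEq]
  omega

lemma honeyGraph_adj_diagVertex {k : ℤ} {v : ℤ × ℤ} : honeyGraph.Adj (diagVertex k) v ↔
    v = upperVertex k ∨ v = diagVertex (k + 1) ∨ v = upperVertex (k - 1) ∨
      v = diagVertex (k - 1) := by
  obtain ⟨x, y⟩ := v
  rw [diagVertex, honeyGraph_adj]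
  simp only [diagVertex, upperVertex, Prod.mk.injEq, true_and]
  omega

/-- Where a matching of the strip between `diagVertex p` and `diagVertex q` may send
`diagVertex k` upwards, given the matching on the upper vertices. -/
def stripUp (σ : ℤ × ℤ → ℤ × ℤ) (q k : ℤ) : ℤ × ℤ :=
  if k = q then diagVertex q
  else if σ (upperVertex k) = diagVertex k ∨ σ (upperVertex k) = diagVertex (k + 1) then
    upperVertex k
  else diagVertex (k + 1)

/-- Where a matching of the strip between `diagVertex p` and `diagVertex q` may send
`diagVertex k` downwards, given the matching on the upper vertices. -/
def stripDown (σ : ℤ × ℤ → ℤ × ℤ) (p k : ℤ) : ℤ × ℤ :=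
  if k = p then diagVertex p
  else if σ (upperVertex (k - 1)) = diagVertex (k - 1) ∨ σ (upperVertex (k - 1)) = diagVertex k then
    upperVertex (k - 1)
  else diagVertex (k - 1)

/-- Reverse the direction of every diagonal vertex of the strip. -/
def stripToggle (p q : ℤ) (σ : ℤ × ℤ → ℤ × ℤ) (v : ℤ × ℤ) : ℤ × ℤ :=
  if v.1 = v.2 ∧ p ≤ v.1 ∧ v.1 ≤ q then
    if σ v = stripUp σ q v.1 then stripDown σ p v.1 else stripUp σ q v.1
  else if v.2 = v.1 + 1 ∧ p ≤ v.1 ∧ v.1 < q then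
    if σ v = diagVertex v.1 then diagVertex (v.1 + 1)
    else if σ v = diagVertex (v.1 + 1) then diagVertex v.1 else σ v
  else σ v

variable {p q : ℤ} {σ : ℤ × ℤ → ℤ × ℤ} {W : Set (ℤ × ℤ)}

lemma stripToggle_diagVertex {k : ℤ} (hpk : p ≤ k) (hkq : k ≤ q) :
    stripToggle p q σ (diagVertex k) =
      if σ (diagVertex k) = stripUp σ q k then stripDown σ p k else stripUp σ q k := by
  rw [stripToggle, if_pos ⟨rfl, hpk, hkq⟩]
  rfl

lemma stripToggle_upperVertex {k : ℤ} (hpk : p ≤ k) (hkq : k < q) :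
    stripToggle p q σ (upperVertex k) =
      if σ (upperVertex k) = diagVertex k then diagVertex (k + 1)
      else if σ (upperVertex k) = diagVertex (k + 1) then diagVertex k
      else σ (upperVertex k) := by
  rw [stripToggle, if_neg (by simp [upperVertex]), if_pos ⟨rfl, hpk, hkq⟩]
  rfl

/-- Vertices whose partner the toggle keeps. -/
def StripUntouched (p q : ℤ) (σ : ℤ × ℤ → ℤ × ℤ) (v : ℤ × ℤ) : Prop :=
  (∀ k, p ≤ k → k ≤ q → v ≠ diagVertex k) ∧
    ∀ k, p ≤ k → k < q → v = upperVertex k → σ v ≠ diagVertex k ∧ σ v ≠ diagVertex (k + 1)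

lemma StripUntouched.stripToggle_eq {v : ℤ × ℤ} (h : StripUntouched p q σ v) :
    stripToggle p q σ v = σ v := by
  obtain ⟨x, y⟩ := v
  unfold stripToggle
  rw [if_neg]
  · split_ifs with h1 h2 h3
    · exact absurd h2 (h.2 x h1.2.1 h1.2.2 (by simp_all [upperVertex])).1
    · exact absurd h3 (h.2 x h1.2.1 h1.2.2 (by simp_all [upperVertex])).2
    · rfl
    · rfl
  · rintro ⟨h1, h2, h3⟩
    simp only at h1
    exact h.1 x h2 h3 (by simp [diagVertex, h1])

lemma strip_cases (p q : ℤ) (σ : ℤ × ℤ → ℤ × ℤ) (v : ℤ × ℤ) :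
    (∃ k, p ≤ k ∧ k ≤ q ∧ v = diagVertex k) ∨
    (∃ k, p ≤ k ∧ k < q ∧ v = upperVertex k ∧
      (σ (upperVertex k) = diagVertex k ∨ σ (upperVertex k) = diagVertex (k + 1))) ∨
    StripUntouched p q σ v := by
  by_cases h1 : ∃ k, p ≤ k ∧ k ≤ q ∧ v = diagVertex k
  · exact Or.inl h1
  · refine Or.inr (or_iff_not_imp_left.2 fun h2 => ⟨fun k h3 h4 h5 => h1 ⟨k, h3, h4, h5⟩,
      fun k h3 h4 h5 => ⟨fun h6 => h2 ⟨k, h3, h4, h5, Or.inl (h5 ▸ h6)⟩,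
        fun h6 => h2 ⟨k, h3, h4, h5, Or.inr (h5 ▸ h6)⟩⟩⟩)

/-- Every diagonal vertex of the strip is matched inside the strip. -/
def StripAligned (p q : ℤ) (σ : ℤ × ℤ → ℤ × ℤ) : Prop :=
  ∀ k, p ≤ k → k ≤ q → σ (diagVertex k) = stripUp σ q k ∨ σ (diagVertex k) = stripDown σ p k

lemma stripUp_ne_stripDown (hpq : p < q) (k : ℤ) : stripUp σ q k ≠ stripDown σ p k := by
  unfold stripUp stripDown
  split_ifs <;>
    simp only [ne_eq, diagVertex_inj, upperVertex_inj, diagVertex_ne_upperVertex,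
      (diagVertex_ne_upperVertex _ _).symm, not_false_eq_true] <;> omega

lemma stripUp_stripToggle {k : ℤ} (hpk : p ≤ k) (hkq : k ≤ q) :
    stripUp (stripToggle p q σ) q k = stripUp σ q k := by
  unfold stripUp
  by_cases hk : k = q
  · simp [hk]
  · rw [stripToggle_upperVertex hpk (by omega)]
    have := @diagVertex_inj k (k + 1)
    congr! 2
    split_ifs <;> grind

lemma stripDown_stripToggle {k : ℤ} (hpk : p ≤ k) (hkq : k ≤ q) :
    stripDown (stripToggle p q σ) p k = stripDown σ p k := by
  unfold stripDown
  by_cases hk : k = p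
  · simp [hk]
  · rw [stripToggle_upperVertex (by omega) (by omega)]
    have := @diagVertex_inj (k - 1) k
    have h2 : k - 1 + 1 = k := by omega
    congr! 2
    rw [h2]
    split_ifs <;> grind

lemma stripAligned_stripToggle : StripAligned p q (stripToggle p q σ) := by
  intro k hpk hkq
  rw [stripUp_stripToggle hpk hkq, stripDown_stripToggle hpk hkq, stripToggle_diagVertex hpk hkq]
  split_ifs <;> simp

lemma StripUntouched.map (hσ : Function.Involutive σ) (h : StripAligned p q σ) {v : ℤ × ℤ}
    (hv : StripUntouched p q σ v) : StripUntouched p q σ (σ v) := by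
  refine ⟨fun k h1 h2 h3 => ?_, fun k h1 h2 _ => ?_⟩
  · have hk : v = σ (diagVertex k) := by rw [← h3, hσ]
    rcases h k h1 h2 with h4 | h4
    · unfold stripUp at h4
      split_ifs at h4 with h5 h6
      · exact hv.1 q (by omega) le_rfl (hk.trans h4)
      · exact (hv.2 k h1 (by omega) (hk.trans h4)).1 h3
      · exact hv.1 (k + 1) (by omega) (by omega) (hk.trans h4)
    · unfold stripDown at h4
      split_ifs at h4 with h5 h6
      · exact hv.1 p le_rfl (by omega) (hk.trans h4)
      · exact (hv.2 (k - 1) (by omega) (by omega) (hk.trans h4)).2 (by rw [h3, sub_add_cancel])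
      · exact hv.1 (k - 1) (by omega) (by omega) (hk.trans h4)
  · rw [hσ]
    exact ⟨hv.1 k h1 h2.le, hv.1 (k + 1) (by omega) (by omega)⟩

lemma StripUntouched.stripToggle {v : ℤ × ℤ} (hv : StripUntouched p q σ v) :
    StripUntouched p q (stripToggle p q σ) v :=
  ⟨hv.1, fun k h1 h2 h3 => hv.stripToggle_eq ▸ hv.2 k h1 h2 h3⟩

lemma StripAligned.stripToggle_stripToggle (hpq : p < q) (h : StripAligned p q σ) :
    stripToggle p q (stripToggle p q σ) = σ := by
  funext v
  rcases strip_cases p q σ v with ⟨k, h1, h2, rfl⟩ | ⟨k, h1, h2, rfl, htip⟩ | hv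
  · rw [stripToggle_diagVertex h1 h2, stripUp_stripToggle h1 h2, stripDown_stripToggle h1 h2,
      stripToggle_diagVertex h1 h2]
    have := stripUp_ne_stripDown (σ := σ) hpq k
    have := h k h1 h2
    split_ifs <;> grind
  · rw [stripToggle_upperVertex h1 h2, stripToggle_upperVertex h1 h2]
    have := @diagVertex_inj k (k + 1)
    split_ifs <;> grind
  · rw [hv.stripToggle.stripToggle_eq, hv.stripToggle_eq]

lemma StripAligned.involutive_stripToggle (hσ : Function.Involutive σ)
    (hpq : p < q) (h : StripAligned p q σ) : Function.Involutive (stripToggle p q σ) := by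
  have hdd := @diagVertex_inj
  intro v
  rcases strip_cases p q σ v with ⟨k, h1, h2, rfl⟩ | ⟨k, h1, h2, rfl, htip⟩ | hv
  · have hk := h k h1 h2
    rw [stripToggle_diagVertex h1 h2]
    split_ifs with hup
    · unfold stripDown
      split_ifs with hkp htip
      · subst hkp
        rw [stripToggle_diagVertex h1 h2, if_pos hup, stripDown, if_pos rfl]
      · rw [stripToggle_upperVertex (by omega) (by omega), sub_add_cancel]
        rcases htip with ht | ht
        · rw [if_pos ht]
        · have hs : σ (diagVertex k) = upperVertex (k - 1) := by rw [← ht, hσ]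
          have hne := stripUp_ne_stripDown (σ := σ) hpq k
          rw [← hup, stripDown, if_neg hkp, if_pos (Or.inr ht)] at hne
          exact absurd hs hne
      · rw [stripToggle_diagVertex (by omega) (by omega)]
        have hup' : stripUp σ q (k - 1) = diagVertex k := by
          rw [stripUp, if_neg (by omega), sub_add_cancel, if_neg htip]
        rw [hup', if_neg]
        intro hs
        have hne := stripUp_ne_stripDown (σ := σ) hpq k
        rw [← hup, stripDown, if_neg hkp, if_neg htip, ← hs, hσ] at hne
        exact hne rfl
    · have hdn := hk.resolve_left hup
      unfold stripUp
      split_ifs with hkq htip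
      · subst hkq
        rw [stripToggle_diagVertex h1 h2, if_neg hup, stripUp, if_pos rfl]
      · rw [stripToggle_upperVertex (by omega) (by omega)]
        rcases htip with ht | ht
        · have hs : σ (diagVertex k) = upperVertex k := by rw [← ht, hσ]
          rw [stripUp, if_neg hkq, if_pos (Or.inl ht)] at hup
          exact absurd hs hup
        · have : diagVertex (k + 1) ≠ diagVertex k := by rw [ne_eq, hdd]; omega
          rw [ht, if_neg this, if_pos rfl]
      · rw [stripToggle_diagVertex (by omega) (by omega)]
        have hdn' : stripDown σ p (k + 1) = diagVertex k := by
          rw [stripDown, if_neg (by omega), add_sub_cancel_right, if_neg htip]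
        rw [hdn', if_pos]
        refine (h (k + 1) (by omega) (by omega)).resolve_right ?_
        rw [hdn']
        intro hs
        rw [stripUp, if_neg hkq, if_neg htip, ← hs, hσ] at hup
        exact hup rfl
  · rw [stripToggle_upperVertex h1 h2]
    split_ifs with ha hb
    · have hs : σ (diagVertex k) = upperVertex k := by rw [← ha, hσ]
      have hdn' : stripDown σ p (k + 1) = upperVertex k := by
        rw [stripDown, if_neg (by omega), add_sub_cancel_right, if_pos (Or.inl ha)]
      rw [stripToggle_diagVertex (by omega) (by omega), hdn', if_pos]
      refine (h (k + 1) (by omega) (by omega)).resolve_right ?_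
      rw [hdn', ← hs, hσ.injective.eq_iff, hdd]
      omega
    · have hs : σ (diagVertex (k + 1)) = upperVertex k := by rw [← hb, hσ]
      have hup' : stripUp σ q k = upperVertex k := by
        rw [stripUp, if_neg (by omega), if_pos (Or.inr hb)]
      rw [stripToggle_diagVertex (by omega) (by omega), hup', if_neg]
      rw [← hs, hσ.injective.eq_iff, hdd]
      omega
    · exact absurd htip (not_or.2 ⟨ha, hb⟩)
  · rw [hv.stripToggle_eq, (hv.map hσ h).stripToggle_eq, hσ]

lemma stripAligned_of_mem_matchings (hσ : σ ∈ matchings honeyGraph W)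
    (hW : ∀ k, p < k → k < q → diagVertex k ∈ W)
    (hp : diagVertex p ∈ W →
      σ (diagVertex p) = upperVertex p ∨ σ (diagVertex p) = diagVertex (p + 1))
    (hq : diagVertex q ∈ W →
      σ (diagVertex q) = upperVertex (q - 1) ∨ σ (diagVertex q) = diagVertex (q - 1))
    (hpq : p < q) : StripAligned p q σ := by
  have hup : ∀ k, k < q → σ (diagVertex k) = upperVertex k ∨ σ (diagVertex k) = diagVertex (k + 1) →
      σ (diagVertex k) = stripUp σ q k := by
    rintro k hk (h | h)
    · rw [stripUp, if_neg hk.ne, if_pos, h]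
      rw [← h, hσ.1]
      exact Or.inl rfl
    · rw [stripUp, if_neg hk.ne, if_neg, h]
      have h' : diagVertex k = σ (diagVertex (k + 1)) := by rw [← h, hσ.1]
      rintro (h1 | h1)
      · rw [← h1, hσ.1] at h
        exact diagVertex_ne_upperVertex _ _ h.symm
      · rw [← h1, hσ.1] at h'
        exact diagVertex_ne_upperVertex _ _ h'
  have hdn : ∀ k, p < k →
      σ (diagVertex k) = upperVertex (k - 1) ∨ σ (diagVertex k) = diagVertex (k - 1) →
      σ (diagVertex k) = stripDown σ p k := by
    rintro k hk (h | h)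
    · rw [stripDown, if_neg hk.ne', if_pos, h]
      rw [← h, hσ.1]
      exact Or.inr rfl
    · rw [stripDown, if_neg hk.ne', if_neg, h]
      have h' : diagVertex k = σ (diagVertex (k - 1)) := by rw [← h, hσ.1]
      rintro (h1 | h1)
      · rw [← h1, hσ.1] at h'
        exact diagVertex_ne_upperVertex _ _ h'
      · rw [← h1, hσ.1] at h
        exact diagVertex_ne_upperVertex _ _ h.symm
  intro k h1 h2
  by_cases hk : diagVertex k ∈ W
  · rcases h1.eq_or_lt with rfl | h3
    · exact Or.inl (hup _ hpq (hp hk))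
    · rcases h2.eq_or_lt with rfl | h4
      · exact Or.inr (hdn _ hpq (hq hk))
      · rcases honeyGraph_adj_diagVertex.1 (hσ.2.1 _ hk) with h | h | h | h
        · exact Or.inl (hup _ h4 (Or.inl h))
        · exact Or.inl (hup _ h4 (Or.inr h))
        · exact Or.inr (hdn _ h3 (Or.inl h))
        · exact Or.inr (hdn _ h3 (Or.inr h))
  · have h3 := hσ.2.2 _ hk
    have h4 : k = p ∨ k = q := by
      by_contra h5
      exact hk (hW k (by omega) (by omega))
    rcases h4 with rfl | rfl
    · exact Or.inr (by rw [h3, stripDown, if_pos rfl])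
    · exact Or.inl (by rw [h3, stripUp, if_pos rfl])

/-- The matchings of `W` in which the ends of the strip, if present, are matched into it. -/
def stripMatchings (p q : ℤ) (W : Set (ℤ × ℤ)) : Set (ℤ × ℤ → ℤ × ℤ) :=
  {σ ∈ matchings honeyGraph W | (diagVertex p ∈ W →
      σ (diagVertex p) = upperVertex p ∨ σ (diagVertex p) = diagVertex (p + 1)) ∧
    (diagVertex q ∈ W →
      σ (diagVertex q) = upperVertex (q - 1) ∨ σ (diagVertex q) = diagVertex (q - 1))}

open scoped symmDiff in
lemma stripToggle_mem_stripMatchings (hpq : p < q) (hW : ∀ k, p < k → k < q → diagVertex k ∈ W)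
    (hσ : σ ∈ stripMatchings p q W) :
    stripToggle p q σ ∈ stripMatchings p q (W ∆ {diagVertex p, diagVertex q}) := by
  have hal := stripAligned_of_mem_matchings hσ.1 hW hσ.2.1 hσ.2.2 hpq
  have hal' : StripAligned p q (stripToggle p q σ) := stripAligned_stripToggle
  have hdn : ∀ k, p < k → k ≤ q → stripDown σ p k = upperVertex (k - 1) ∨ 
      stripDown σ p k = diagVertex (k - 1) := by
    intro k hk _
    rw [stripDown, if_neg hk.ne']
    split_ifs <;> simp
  have hup : ∀ k, k < q → stripUp σ q k = upperVertex k ∨ stripUp σ q k = diagVertex (k + 1) := by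
    intro k hk
    rw [stripUp, if_neg hk.ne]
    split_ifs <;> simp
  have hinv := hal.involutive_stripToggle hσ.1.1 hpq
  have hmat : stripToggle p q σ ∈ matchings honeyGraph (W ∆ {diagVertex p, diagVertex q}) := by
    have hadj : ∀ v, stripToggle p q σ v ≠ v → honeyGraph.Adj v (stripToggle p q σ v) := by
      intro v hv
      rcases strip_cases p q σ v with ⟨k, h1, h2, rfl⟩ | ⟨k, h1, h2, rfl, htip⟩ | hvu
      · rw [honeyGraph_adj_diagVertex]
        rcases hal' k h1 h2 with h3 | h3
        · rw [stripUp_stripToggle h1 h2] at h3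
          rw [h3] at hv ⊢
          have : k ≠ q := by rintro rfl; exact hv (by rw [stripUp, if_pos rfl])
          have := hup k (by omega)
          tauto
        · rw [stripDown_stripToggle h1 h2] at h3
          rw [h3] at hv ⊢
          have : k ≠ p := by rintro rfl; exact hv (by rw [stripDown, if_pos rfl])
          have := hdn k (by omega) h2
          tauto
      · rw [stripToggle_upperVertex h1 h2]
        rcases htip with ht | ht
        · rw [if_pos ht]
          exact (honeyGraph_adj_diagVertex.2 (by simp)).symm
        · rw [ht, if_neg (by rw [diagVertex_inj]; omega), if_pos rfl]
          exact (honeyGraph_adj_diagVertex.2 (by simp)).symm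
      · rw [hvu.stripToggle_eq] at hv ⊢
        exact adj_of_mem_matchings hσ.1 hv
    have hmem : ∀ v, v ∈ W ∆ {diagVertex p, diagVertex q} ↔ stripToggle p q σ v ≠ v := by
      intro v
      have hvW := mem_iff_of_mem_matchings hσ.1 (v := v)
      have hother : v ≠ diagVertex p → v ≠ diagVertex q →
          (v ∈ W ∆ {diagVertex p, diagVertex q} ↔ v ∈ W) := by
        intro h1 h2
        simp [Set.mem_symmDiff, h1, h2]
      have hend : v = diagVertex p ∨ v = diagVertex q →
          (v ∈ W ∆ {diagVertex p, diagVertex q} ↔ v ∉ W) := by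
        rintro (h | h) <;> simp [Set.mem_symmDiff, h]
      rcases strip_cases p q σ v with ⟨k, h1, h2, rfl⟩ | ⟨k, h1, h2, rfl, htip⟩ | hvu
      · rw [stripToggle_diagVertex h1 h2]
        have hne := stripUp_ne_stripDown (σ := σ) hpq k
        have hk := hal k h1 h2
        rcases h1.eq_or_lt with rfl | h3
        · have h4 : stripDown σ p p = diagVertex p := by rw [stripDown, if_pos rfl]
          rw [hend (Or.inl rfl), hvW]
          rw [h4] at hne hk ⊢
          split_ifs <;> grind
        · rcases h2.eq_or_lt with rfl | h5
          · have h4 : stripUp σ k k = diagVertex k := by rw [stripUp, if_pos rfl]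
            rw [hend (Or.inr rfl), hvW]
            rw [h4] at hne hk ⊢
            split_ifs <;> grind
          · rw [hother (by rw [ne_eq, diagVertex_inj]; omega)
              (by rw [ne_eq, diagVertex_inj]; omega)]
            refine iff_of_true (hW k h3 h5) ?_
            have h6 := hup k h5
            have h7 := hdn k h3 h2
            have h8 := diagVertex_ne_upperVertex
            have h9 := @diagVertex_inj
            split_ifs <;> grind
      · rw [hother (diagVertex_ne_upperVertex _ _).symm (diagVertex_ne_upperVertex _ _).symm, hvW,
          stripToggle_upperVertex h1 h2]
        have h8 := diagVertex_ne_upperVertex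
        split_ifs <;> grind
      · rw [hother (hvu.1 p le_rfl hpq.le) (hvu.1 q hpq.le le_rfl), hvu.stripToggle_eq, hvW]
    exact ⟨hinv, fun v hv => hadj v ((hmem v).1 hv),
      fun v hv => not_not.1 fun h => hv ((hmem v).2 h)⟩
  have hne : ∀ v ∈ W ∆ {diagVertex p, diagVertex q}, stripToggle p q σ v ≠ v :=
    fun v hv => (mem_iff_of_mem_matchings hmat).1 hv
  refine ⟨hmat, fun hp => ?_, fun hq => ?_⟩
  · rcases hal' p le_rfl hpq.le with h1 | h1
    · rw [stripUp_stripToggle le_rfl hpq.le] at h1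
      rw [h1]
      exact hup p hpq
    · rw [stripDown, if_pos rfl] at h1
      exact absurd h1 (hne _ hp)
  · rcases hal' q hpq.le le_rfl with h1 | h1
    · rw [stripUp, if_pos rfl] at h1
      exact absurd h1 (hne _ hq)
    · rw [stripDown_stripToggle hpq.le le_rfl] at h1
      rw [h1]
      exact hdn q hpq le_rfl

open scoped symmDiff in
lemma ncard_stripMatchings_symmDiff (hpq : p < q)
    (hW : ∀ k, p < k → k < q → diagVertex k ∈ W) :
    (stripMatchings p q (W ∆ {diagVertex p, diagVertex q})).ncard =
      (stripMatchings p q W).ncard := by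
  have hW' : ∀ k, p < k → k < q → diagVertex k ∈ W ∆ {diagVertex p, diagVertex q} := by
    intro k h1 h2
    have := hW k h1 h2
    simp only [Set.mem_symmDiff, Set.mem_insert_iff, Set.mem_singleton_iff, diagVertex_inj]
    exact Or.inl ⟨this, by omega⟩
  have htog : ∀ {W : Set (ℤ × ℤ)} {σ}, (∀ k, p < k → k < q → diagVertex k ∈ W) →
      σ ∈ stripMatchings p q W → stripToggle p q (stripToggle p q σ) = σ := fun hW hσ =>
    (stripAligned_of_mem_matchings hσ.1 hW hσ.2.1 hσ.2.2 hpq).stripToggle_stripToggle hpq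
  refine Set.ncard_congr (fun σ _ => stripToggle p q σ) ?_ ?_ ?_
  · intro σ hσ
    have := stripToggle_mem_stripMatchings hpq hW' hσ
    rwa [symmDiff_symmDiff_cancel_right] at this
  · intro σ τ hσ hτ h
    rw [← htog hW' hσ, ← htog hW' hτ, h]
  · intro σ hσ
    exact ⟨stripToggle p q σ, stripToggle_mem_stripMatchings hpq hW hσ, htog hW hσ⟩

open scoped symmDiff in
/-- Summing over the two directions in which the diagonal vertex `q` can be matched. -/
theorem matchNum_eq_add_of_strip {r : ℤ} (hfin : W.Finite) (hpq : p < q) (hqr : q < r)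
    (hW : ∀ k, p < k → k < r → diagVertex k ∈ W)
    (hp : diagVertex (p - 1) ∉ W) (hp' : upperVertex (p - 1) ∉ W)
    (hr : diagVertex (r + 1) ∉ W) (hr' : upperVertex r ∉ W) :
    matchNum honeyGraph W = matchNum honeyGraph (W ∆ {diagVertex p, diagVertex q}) +
      matchNum honeyGraph (W ∆ {diagVertex q, diagVertex r}) := by
  have hqW := hW q hpq hqr
  have hlow : ∀ {U : Set (ℤ × ℤ)} {σ}, diagVertex (p - 1) ∉ U → upperVertex (p - 1) ∉ U →
      σ ∈ matchings honeyGraph U → diagVertex p ∈ U →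
      σ (diagVertex p) = upperVertex p ∨ σ (diagVertex p) = diagVertex (p + 1) := by
    intro U σ h1 h2 hσ h3
    have h4 := map_mem_of_mem_matchings hσ h3
    rcases honeyGraph_adj_diagVertex.1 (hσ.2.1 _ h3) with h | h | h | h
    · exact Or.inl h
    · exact Or.inr h
    · exact absurd (h ▸ h4) h2
    · exact absurd (h ▸ h4) h1
  have hhigh : ∀ {U : Set (ℤ × ℤ)} {σ}, diagVertex (r + 1) ∉ U → upperVertex r ∉ U →
      σ ∈ matchings honeyGraph U → diagVertex r ∈ U →
      σ (diagVertex r) = upperVertex (r - 1) ∨ σ (diagVertex r) = diagVertex (r - 1) := by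
    intro U σ h1 h2 hσ h3
    have h4 := map_mem_of_mem_matchings hσ h3
    rcases honeyGraph_adj_diagVertex.1 (hσ.2.1 _ h3) with h | h | h | h
    · exact absurd (h ▸ h4) h2
    · exact absurd (h ▸ h4) h1
    · exact Or.inl h
    · exact Or.inr h
  have hbelow : stripMatchings p q (W ∆ {diagVertex p, diagVertex q}) =
      matchings honeyGraph (W ∆ {diagVertex p, diagVertex q}) := by
    refine Set.Subset.antisymm (fun σ hσ => hσ.1) fun σ hσ => ⟨hσ, hlow ?_ ?_ hσ, fun h => ?_⟩
    · simp only [Set.mem_symmDiff, Set.mem_insert_iff, Set.mem_singleton_iff, diagVertex_inj]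
      rintro (h | h)
      · exact hp h.1
      · omega
    · simp only [Set.mem_symmDiff, Set.mem_insert_iff, Set.mem_singleton_iff,
        (diagVertex_ne_upperVertex _ _).symm, hp']
      simp
    · simp [Set.mem_symmDiff, hqW] at h
  have habove : stripMatchings q r (W ∆ {diagVertex q, diagVertex r}) =
      matchings honeyGraph (W ∆ {diagVertex q, diagVertex r}) := by
    refine Set.Subset.antisymm (fun σ hσ => hσ.1) fun σ hσ => ⟨hσ, fun h => ?_, hhigh ?_ ?_ hσ⟩
    · simp [Set.mem_symmDiff, hqW] at h
    · simp only [Set.mem_symmDiff, Set.mem_insert_iff, Set.mem_singleton_iff, diagVertex_inj]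
      rintro (h | h)
      · exact hr h.1
      · omega
    · simp only [Set.mem_symmDiff, Set.mem_insert_iff, Set.mem_singleton_iff,
        (diagVertex_ne_upperVertex _ _).symm, hr']
      simp
  have hunion : matchings honeyGraph W = stripMatchings p q W ∪ stripMatchings q r W := by
    refine Set.Subset.antisymm (fun σ hσ => ?_) (Set.union_subset (fun σ h => h.1) fun σ h => h.1)
    rcases honeyGraph_adj_diagVertex.1 (hσ.2.1 _ hqW) with h | h | h | h
    · exact Or.inr ⟨hσ, fun _ => Or.inl h, hhigh hr hr' hσ⟩
    · exact Or.inr ⟨hσ, fun _ => Or.inr h, hhigh hr hr' hσ⟩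
    · exact Or.inl ⟨hσ, hlow hp hp' hσ, fun _ => Or.inl h⟩
    · exact Or.inl ⟨hσ, hlow hp hp' hσ, fun _ => Or.inr h⟩
  have hdisj : Disjoint (stripMatchings p q W) (stripMatchings q r W) := by
    rw [Set.disjoint_left]
    intro σ h1 h2
    have h3 := h1.2.2 hqW
    have h4 := h2.2.1 hqW
    have h8 := diagVertex_ne_upperVertex
    have h9 := @diagVertex_inj
    have h10 := @upperVertex_inj
    rcases h3 with h3 | h3 <;> rcases h4 with h4 | h4 <;> rw [h3] at h4
    · rw [h10] at h4; omega
    · exact h8 _ _ h4.symm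
    · exact h8 _ _ h4
    · rw [h9] at h4; omega
  have hfin' := finite_matchings (G := honeyGraph) hfin
  rw [matchNum, matchNum, matchNum, ← hbelow, ← habove,
    ncard_stripMatchings_symmDiff hpq fun k h1 h2 => hW k h1 (by omega),
    ncard_stripMatchings_symmDiff hqr fun k h1 h2 => hW k (by omega) h2, hunion]
  exact Set.ncard_union_eq hdisj (hfin'.subset fun σ h => h.1) (hfin'.subset fun σ h => h.1)

end Strip

section Recurrence

open scoped symmDiff

/-- The vertices of `G_n` other than `(2n, 2n + 1)`, without `(2n, 2n)` if `n` is even. -/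
def coreVertices (n : ℕ) : Set (ℤ × ℤ) :=
  {x | 0 ≤ x.1 ∧ x.1 ≤ 2 * (n : ℤ) ∧ x.1 ≤ x.2 ∧ x.2 ≤ 2 * (n : ℤ) + 1 ∧
    ¬ (x.1 = 2 * (n : ℤ) ∧ (x.2 = 2 * (n : ℤ) + 1 ∨ n % 2 = 0))}

lemma finite_coreVertices (n : ℕ) : (coreVertices n).Finite := by
  refine ((Set.finite_Icc (0 : ℤ) (2 * n)).prod (Set.finite_Icc (0 : ℤ) (2 * n + 1))).subset ?_
  rintro ⟨x, y⟩ ⟨h1, h2, h3, h4, -⟩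
  simp only at h1 h2 h3 h4
  simp only [Set.mem_prod, Set.mem_Icc]
  omega

/-- The number of perfect matchings of the core after toggling the vertices in `S`. -/
noncomputable def coreNum (n : ℕ) (S : Set (ℤ × ℤ)) : ℕ :=
  matchNum honeyGraph (coreVertices n ∆ S)

lemma Zpm_eq_matchNum (n : ℕ) (U : Set (ℤ × ℤ)) :
    Zpm n U = matchNum honeyGraph (Vset n \ U) := by
  rw [Zpm, card_isPerfectMatching_induce, matchNum, matchNum]
  congr 1
  refine matchings_congr ?_
  rintro ⟨x1, x2⟩ ⟨hx, -⟩ ⟨y1, y2⟩ ⟨hy, -⟩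
  have e : ∀ x y : ℤ × ℤ, memV n x → memV n y → (edgeRel n x y ↔ honeyRel x y) := by
    rintro ⟨x1, x2⟩ ⟨y1, y2⟩ hx hy
    simp only [memV] at hx hy
    simp only [edgeRel, honeyRel, Int.odd_iff]
    constructor
    · rintro (h | h | h) <;> omega
    · rintro (h | h | h)
      · omega
      · omega
      · omega
  exact or_congr (e _ _ hx hy) (e _ _ hy hx)

lemma Zpm_eq_coreNum (n : ℕ) {U : Set (ℤ × ℤ)}
    (hU : ∀ v ∈ U, v.1 = v.2 ∧ 0 ≤ v.1 ∧ v.1 < 2 * (n : ℤ)) : Zpm n U = coreNum n U := by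
  have hsub : ∀ v ∈ U, v ∈ coreVertices n := by
    rintro ⟨x, y⟩ hv
    have := hU _ hv
    simp only [coreVertices, Set.mem_ofPred_eq] at this ⊢
    omega
  have hsd : coreVertices n ∆ U = coreVertices n \ U := by
    ext v
    have := hsub v
    simp only [Set.mem_symmDiff, Set.mem_sdiff]
    tauto
  rw [Zpm_eq_matchNum, coreNum, hsd]
  rcases Nat.mod_two_eq_zero_or_one n with hn | hn
  · set F : Set (ℤ × ℤ) := {v | v.1 = 2 * (n : ℤ) ∧ (v.2 = 2 * (n : ℤ) ∨ v.2 = 2 * (n : ℤ) + 1)}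
      with hF
    have hFU : ∀ v ∈ F, v ∉ U := by
      rintro v hv hvU
      have := hU v hvU
      have := hv.1
      omega
    have hFV : F ⊆ Vset n \ U := by
      rintro ⟨x, y⟩ hv
      refine ⟨?_, hFU _ hv⟩
      simp only [hF, Set.mem_ofPred_eq] at hv
      simp only [Vset, memV, Set.mem_ofPred_eq]
      omega
    have hdiff : (Vset n \ U) \ F = coreVertices n \ U := by
      ext ⟨x, y⟩
      simp only [hF, Vset, memV, coreVertices, Set.mem_sdiff, Set.mem_ofPred_eq]
      by_cases h : (x, y) ∈ U
      · simp [h]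
      · simp only [h, not_false_eq_true, and_true]
        omega
    rw [← hdiff]
    have htop : ∀ σ ∈ matchings honeyGraph (Vset n \ U),
        σ (2 * (n : ℤ), 2 * (n : ℤ) + 1) = (2 * (n : ℤ), 2 * (n : ℤ)) := by
      intro σ hσ
      have h1 : (2 * (n : ℤ), 2 * (n : ℤ) + 1) ∈ Vset n \ U := hFV ⟨rfl, Or.inr rfl⟩
      have h2 := Set.sdiff_subset (map_mem_of_mem_matchings hσ h1)
      have h3 := hσ.2.1 _ h1
      rcases hw : σ (2 * (n : ℤ), 2 * (n : ℤ) + 1) with ⟨x, y⟩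
      rw [hw] at h2 h3
      rw [honeyGraph_adj] at h3
      simp only [Vset, memV, Set.mem_ofPred_eq] at h2
      simp only [Prod.mk.injEq]
      omega
    refine matchNum_diff_of_forced hFV
      (τ := Equiv.swap (2 * (n : ℤ), 2 * (n : ℤ) + 1) (2 * (n : ℤ), 2 * (n : ℤ))) ?_ ?_
    · refine ⟨Equiv.swap_apply_self _ _, ?_, ?_⟩
      · rintro ⟨x, y⟩ ⟨rfl, rfl | rfl⟩ <;>
          simp [Equiv.swap_apply_left, Equiv.swap_apply_right, honeyGraph_adj]
      · intro v hv
        exact Equiv.swap_apply_of_ne_of_ne (by rintro rfl; exact hv ⟨rfl, Or.inr rfl⟩)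
          (by rintro rfl; exact hv ⟨rfl, Or.inl rfl⟩)
    · rintro σ hσ ⟨x, y⟩ ⟨rfl, rfl | rfl⟩
      · have := htop σ hσ
        rw [← this, hσ.1]
        simp
      · have := htop σ hσ
        simpa using this
  · congr 2
    ext ⟨x, y⟩
    simp only [Vset, memV, coreVertices, Set.mem_ofPred_eq]
    omega

lemma Zpm_bvertex_eq_coreNum (n : ℕ) {j : ℤ} (h0 : 0 ≤ j) (hj : j < 2 * (n : ℤ)) :
    Zpm n {(j, j), bvertex n} = coreNum n {diagVertex j, diagVertex (2 * n)} := by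
  rw [Zpm_eq_matchNum, coreNum]
  congr 1
  ext ⟨x, y⟩
  simp only [Vset, memV, coreVertices, bvertex, diagVertex, Set.mem_symmDiff, Set.mem_sdiff,
    Set.mem_insert_iff, Set.mem_singleton_iff, Set.mem_ofPred_eq, Prod.mk.injEq]
  rcases Nat.mod_two_eq_zero_or_one n with hn | hn <;>
    simp only [hn, zero_ne_one, one_ne_zero, true_and, false_and, and_true, or_true, or_false,
      not_false_eq_true] <;> omega

lemma honeyRel_add_two (x y z w : ℤ) :
    honeyRel (x + 2, y + 2) (z + 2, w + 2) ↔ honeyRel (x, y) (z, w) := by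
  simp only [honeyRel]
  refine or_congr ?_ (or_congr ?_ ?_) <;> constructor <;> intro h <;> omega

/-- If `(1, 1)` is missing, the first two columns are matched in a unique way. -/
lemma forced_columns {W : Set (ℤ × ℤ)} {m : ℕ}
    (hW : ∀ v : ℤ × ℤ, v.1 ≤ 1 →
      (v ∈ W ↔ 0 ≤ v.1 ∧ v.1 ≤ v.2 ∧ v.2 ≤ 2 * (m : ℤ) + 1 ∧ ¬ (v.1 = 1 ∧ v.2 = 1)))
    {σ : ℤ × ℤ → ℤ × ℤ} (hσ : σ ∈ matchings honeyGraph W) :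
    (∀ k : ℕ, k ≤ m → σ (0, 2 * (k : ℤ)) = (0, 2 * (k : ℤ) + 1)) ∧
      ∀ k : ℕ, 1 ≤ k → k ≤ m → σ (1, 2 * (k : ℤ) + 1) = (1, 2 * (k : ℤ)) := by
  have hmemW : ∀ x y : ℤ, x ≤ 1 → ((x, y) ∈ W ↔
      0 ≤ x ∧ x ≤ y ∧ y ≤ 2 * (m : ℤ) + 1 ∧ ¬ (x = 1 ∧ y = 1)) := fun x y h => hW (x, y) h
  have hpartner : ∀ u v : ℤ × ℤ, u ∈ W →
      (∀ x y, (x, y) ∈ W → honeyGraph.Adj u (x, y) → σ (x, y) = u → (x, y) = v) → σ u = v :=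
    fun u v hu h => h _ _ (map_mem_of_mem_matchings hσ hu) (hσ.2.1 u hu) (hσ.1 u)
  have hzero : ∀ k : ℕ, k ≤ m →
      σ (0, 2 * (k : ℤ)) = (0, 2 * (k : ℤ) + 1) := by
    intro k
    induction k with
    | zero =>
      intro _
      refine hpartner _ _ ((hmemW _ _ (by omega)).2 (by omega)) fun x y h1 h2 _ => ?_
      rw [honeyGraph_adj] at h2
      rw [hmemW] at h1
      · rw [Prod.mk.injEq]
        omega
      · omega
    | succ k ih =>
      intro hk
      have hprev := ih (by omega)
      refine hpartner _ _ ((hmemW _ _ (by omega)).2 (by omega)) fun x y h1 h2 h3 => ?_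
      have h4 : (x, y) ≠ (0, 2 * (k : ℤ) + 1) := by
        intro h4
        rw [h4, ← hprev, hσ.1] at h3
        rw [Prod.mk.injEq] at h3
        omega
      rw [honeyGraph_adj] at h2
      rw [ne_eq, Prod.mk.injEq] at h4
      rw [hmemW _ _ (by omega)] at h1
      rw [Prod.mk.injEq]
      omega
  have hone : ∀ k l : ℕ, k + l = m → 1 ≤ k →
      σ (1, 2 * (k : ℤ) + 1) = (1, 2 * (k : ℤ)) := by
    intro k l
    induction l generalizing k with
    | zero =>
      intro h1 h2
      obtain rfl : k = m := by omega
      refine hpartner _ _ ((hmemW _ _ le_rfl).2 (by omega)) fun x y h3 h4 h5 => ?_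
      have h6 : (x, y) ≠ (0, 2 * (k : ℤ) + 1) := by
        intro h6
        rw [h6, ← hzero k le_rfl, hσ.1] at h5
        simp at h5
      rw [ne_eq, Prod.mk.injEq] at h6
      rw [honeyGraph_adj] at h4
      rw [hmemW _ _ (by omega)] at h3
      rw [Prod.mk.injEq]
      omega
    | succ l ih =>
      intro h1 h2
      have hnext := ih (k + 1) (by omega) (by omega)
      refine hpartner _ _ ((hmemW _ _ le_rfl).2 (by omega)) fun x y h3 h4 h5 => ?_
      have h6 : (x, y) ≠ (0, 2 * (k : ℤ) + 1) := by
        intro h6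
        rw [h6, ← hzero k (by omega), hσ.1] at h5
        simp at h5
      have h7 : (x, y) ≠ (1, 2 * ((k + 1 : ℕ) : ℤ)) := by
        intro h7
        rw [h7, ← hnext, hσ.1, Prod.mk.injEq] at h5
        omega
      rw [ne_eq, Prod.mk.injEq] at h6 h7
      rw [honeyGraph_adj] at h4
      rw [hmemW _ _ (by omega)] at h3
      rw [Prod.mk.injEq]
      omega
  exact ⟨hzero, fun k h1 h2 => hone k (m - k) (by omega) h1⟩

lemma matchNum_eq_of_columns {W : Set (ℤ × ℤ)} {m : ℕ}
    (hW : ∀ v : ℤ × ℤ, v.1 ≤ 1 →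
      (v ∈ W ↔ 0 ≤ v.1 ∧ v.1 ≤ v.2 ∧ v.2 ≤ 2 * (m : ℤ) + 1 ∧ ¬ (v.1 = 1 ∧ v.2 = 1))) :
    matchNum honeyGraph W =
      matchNum honeyGraph {v | 0 ≤ v.1 ∧ (v.1 + 2, v.2 + 2) ∈ W} := by
  classical
  set F : Set (ℤ × ℤ) := {v | v ∈ W ∧ v.1 ≤ 1} with hF
  have hmemF : ∀ x y : ℤ, (x, y) ∈ F ↔
      x ≤ 1 ∧ 0 ≤ x ∧ x ≤ y ∧ y ≤ 2 * (m : ℤ) + 1 ∧ ¬ (x = 1 ∧ y = 1) := by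
    intro x y
    constructor
    · rintro ⟨h1, h2⟩
      exact ⟨h2, (hW _ h2).1 h1⟩
    · rintro ⟨h1, h2⟩
      exact ⟨(hW (x, y) h1).2 h2, h1⟩
  set τ : ℤ × ℤ → ℤ × ℤ := fun v =>
    if v ∈ F then if v.2 % 2 = 0 then (v.1, v.2 + 1) else (v.1, v.2 - 1) else v with hτ
  have hτ0 : ∀ x y : ℤ, (x, y) ∈ F → y % 2 = 0 → τ (x, y) = (x, y + 1) := by
    intro x y h1 h2
    simp [hτ, h1, h2]
  have hτ1 : ∀ x y : ℤ, (x, y) ∈ F → y % 2 = 1 → τ (x, y) = (x, y - 1) := by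
    intro x y h1 h2
    simp [hτ, h1, h2]
  have hτF : ∀ v, v ∉ F → τ v = v := fun v hv => by simp [hτ, hv]
  rw [matchNum_diff_of_forced (F := F) (τ := τ) (fun v hv => hv.1)]
  · let e : ℤ × ℤ ≃ ℤ × ℤ := Equiv.addRight ((2, 2) : ℤ × ℤ)
    rw [← matchNum_preimage e]
    · congr 1
      ext ⟨x, y⟩
      have he : e (x, y) = (x + 2, y + 2) := rfl
      rw [Set.mem_preimage, he]
      simp only [hF, Set.mem_sdiff, Set.mem_ofPred_eq]
      constructor
      · rintro ⟨h1, h2⟩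
        refine ⟨?_, h1⟩
        by_contra h3
        by_cases h4 : x + 2 ≤ 1
        · exact h2 ⟨h1, h4⟩
        · omega
      · rintro ⟨h1, h2⟩
        exact ⟨h2, fun h => by omega⟩
    · rintro ⟨x, y⟩ ⟨z, w⟩
      have he : ∀ x y : ℤ, e (x, y) = (x + 2, y + 2) := fun _ _ => rfl
      rw [he, he]
      exact or_congr (honeyRel_add_two _ _ _ _) (honeyRel_add_two _ _ _ _)
  · refine ⟨?_, ?_, hτF⟩
    · rintro ⟨x, y⟩
      by_cases h : (x, y) ∈ F
      · have h' := (hmemF x y).1 h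
        rcases Int.emod_two_eq_zero_or_one y with hy | hy
        · rw [hτ0 x y h hy, hτ1 x (y + 1) ((hmemF _ _).2 (by omega)) (by omega),
            add_sub_cancel_right]
        · rw [hτ1 x y h hy, hτ0 x (y - 1) ((hmemF _ _).2 (by omega)) (by omega), sub_add_cancel]
      · rw [hτF _ h, hτF _ h]
    · rintro ⟨x, y⟩ h
      have h' := (hmemF x y).1 h
      rcases Int.emod_two_eq_zero_or_one y with hy | hy
      · rw [hτ0 x y h hy]
        exact Or.inl (Or.inr (Or.inl ⟨rfl, rfl, h'.2.2.1⟩))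
      · rw [hτ1 x y h hy]
        exact Or.inr (Or.inr (Or.inl ⟨rfl, (sub_add_cancel y 1).symm, by simp only; omega⟩))
  · rintro σ hσ ⟨x, y⟩ h
    have h' := (hmemF x y).1 h
    obtain ⟨k, hk⟩ : ∃ k : ℕ, y = 2 * (k : ℤ) ∨ y = 2 * (k : ℤ) + 1 :=
      ⟨(y / 2).toNat, by omega⟩
    have hx : x = 0 ∨ x = 1 := by omega
    rcases hk with rfl | rfl
    · rw [hτ0 _ _ h (by omega)]
      rcases hx with rfl | rfl
      · exact (forced_columns hW hσ).1 k (by omega)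
      · rw [← (forced_columns hW hσ).2 k (by omega) (by omega), hσ.1]
    · rw [hτ1 _ _ h (by omega), add_sub_cancel_right]
      rcases hx with rfl | rfl
      · rw [← (forced_columns hW hσ).1 k (by omega), hσ.1]
      · exact (forced_columns hW hσ).2 k (by omega) (by omega)

lemma coreNum_succ (n : ℕ) {S U : Set (ℤ × ℤ)} (hU : ∀ v : ℤ × ℤ, v.1 ≤ 1 →
      (v ∈ U ↔ v = diagVertex 1))
    (hS : ∀ x y : ℤ, 0 ≤ x → ((x + 2, y + 2) ∈ U ↔ ¬ ((x, y) ∈ S ↔ (x, y) = diagVertex (2 * n))))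
    (hneg : ∀ v ∈ S, 0 ≤ v.1) :
    coreNum (n + 1) U = coreNum n S := by
  rw [coreNum, coreNum, matchNum_eq_of_columns (m := n + 1)]
  · congr 1
    ext ⟨x, y⟩
    have h1 := hS x y
    have h2 := hneg (x, y)
    simp only [coreVertices, Set.mem_symmDiff, Set.mem_ofPred_eq, diagVertex,
      Prod.mk.injEq] at h1 h2 ⊢
    push_cast
    by_cases hx : 0 ≤ x
    · rw [h1 hx]
      by_cases h3 : (x, y) ∈ S
      · simp only [h3, true_and, and_false, false_or, not_true_eq_false, true_iff]
        omega
      · simp only [h3, and_true, false_and, or_false, not_false_eq_true, false_iff]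
        omega
    · have h3 : (x, y) ∉ S := fun h => hx (h2 h)
      simp only [h3, and_true, false_and, or_false, not_false_eq_true]
      omega
  · rintro ⟨x, y⟩ hx
    have := hU (x, y) hx
    simp only [coreVertices, Set.mem_symmDiff, Set.mem_ofPred_eq, diagVertex,
      Prod.mk.injEq] at this ⊢
    rw [this]
    simp only at hx
    push_cast
    omega

lemma coreNum_empty_eq_add (n : ℕ) {j : ℤ} (h0 : 0 < j) (hj : j < 2 * (n : ℤ)) :
    coreNum n ∅ = coreNum n {diagVertex 0, diagVertex j} +
      coreNum n {diagVertex j, diagVertex (2 * n)} := by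
  have h : coreVertices n ∆ ∅ = coreVertices n := symmDiff_bot _
  rw [coreNum, coreNum, coreNum, h]
  refine matchNum_eq_add_of_strip (finite_coreVertices n) h0 hj ?_ ?_ ?_ ?_ ?_
  · intro k h1 h2
    simp only [coreVertices, diagVertex, Set.mem_ofPred_eq]
    omega
  · simp only [coreVertices, diagVertex, Set.mem_ofPred_eq]
    omega
  · simp only [coreVertices, upperVertex, Set.mem_ofPred_eq]
    omega
  · simp only [coreVertices, diagVertex, Set.mem_ofPred_eq]
    omega
  · simp [coreVertices, upperVertex]

lemma coreNum_succ_pair_top (n : ℕ) :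
    coreNum (n + 1) {diagVertex 1, diagVertex (2 * (n + 1 : ℕ))} = coreNum n ∅ := by
  refine coreNum_succ n ?_ ?_ (by simp)
  · rintro ⟨x, y⟩ hx
    simp only [diagVertex, Set.mem_insert_iff, Set.mem_singleton_iff, Prod.mk.injEq] at hx ⊢
    push_cast
    omega
  · intro x y hx
    simp only [diagVertex, Set.mem_insert_iff, Set.mem_singleton_iff, Prod.mk.injEq,
      Set.mem_empty_iff_false, false_iff, not_not]
    push_cast
    omega

lemma coreNum_succ_pair (n : ℕ) {j : ℤ} (h2 : 2 ≤ j) (hj : j < 2 * (n : ℤ) + 2) :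
    coreNum (n + 1) {diagVertex 1, diagVertex j} =
      coreNum n {diagVertex (j - 2), diagVertex (2 * n)} := by
  refine coreNum_succ n ?_ ?_ ?_
  · rintro ⟨x, y⟩ hx
    simp only [diagVertex, Set.mem_insert_iff, Set.mem_singleton_iff, Prod.mk.injEq] at hx ⊢
    omega
  · intro x y hx
    simp only [diagVertex, Set.mem_insert_iff, Set.mem_singleton_iff, Prod.mk.injEq]
    omega
  · rintro v (rfl | rfl) <;> simp only [diagVertex] <;> omega

lemma coreNum_succ_quadruple (n : ℕ) {i j : ℤ} (h2 : 2 ≤ i) (hij : i < j)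
    (hj : j < 2 * (n : ℤ) + 2) :
    coreNum (n + 1) {diagVertex 1, diagVertex i, diagVertex j, diagVertex (2 * (n + 1 : ℕ))} =
      coreNum n {diagVertex (i - 2), diagVertex (j - 2)} := by
  refine coreNum_succ n ?_ ?_ ?_
  · rintro ⟨x, y⟩ hx
    simp only [diagVertex, Set.mem_insert_iff, Set.mem_singleton_iff, Prod.mk.injEq] at hx ⊢
    push_cast
    omega
  · intro x y hx
    simp only [diagVertex, Set.mem_insert_iff, Set.mem_singleton_iff, Prod.mk.injEq]
    push_cast
    omega
  · rintro v (rfl | rfl) <;> simp only [diagVertex] <;> omega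

lemma Zpm_empty_pos (n : ℕ) : 0 < Zpm n ∅ := by
  rw [Zpm_eq_coreNum n (by simp)]
  induction n with
  | zero =>
    have h : coreVertices 0 ∆ ∅ = ∅ := by
      ext ⟨x, y⟩
      simp only [coreVertices, Set.mem_symmDiff, Set.mem_ofPred_eq, Set.mem_empty_iff_false,
        not_false_eq_true, and_true, false_and, or_false, iff_false, Nat.zero_mod, or_true]
      rw [Nat.cast_zero]
      omega
    have hid : id ∈ matchings honeyGraph ∅ := ⟨fun _ => rfl, by simp, fun _ _ => rfl⟩
    rw [coreNum, h, matchNum, Set.ncard_pos (finite_matchings Set.finite_empty)]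
    exact ⟨id, hid⟩
  | succ n ih =>
    have h := coreNum_empty_eq_add (n + 1) (j := 1) (by omega) (by push_cast; omega)
    have h' := coreNum_succ_pair_top n
    omega

lemma coreNum_condensation (n : ℕ) {i j : ℤ} (hi : 1 < i) (hij : i < j) (hj : j < 2 * (n : ℤ)) :
    coreNum n ∅ * coreNum n {diagVertex 1, diagVertex i, diagVertex j, diagVertex (2 * n)} +
        coreNum n {diagVertex 1, diagVertex j} * coreNum n {diagVertex i, diagVertex (2 * n)} =
      coreNum n {diagVertex 1, diagVertex i} * coreNum n {diagVertex j, diagVertex (2 * n)} +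
        coreNum n {diagVertex 1, diagVertex (2 * n)} * coreNum n {diagVertex i, diagVertex j} := by
  have h : coreVertices n ∆ ∅ = coreVertices n := symmDiff_bot _
  simp only [coreNum, h]
  refine condensation (finite_coreVertices n) ?_ ?_ ?_ ?_ ?_ ?_
    (noCrossing_honeyGraph hi hij hj) <;>
    rw [ne_eq, diagVertex_inj] <;> omega

lemma gb_eq (n j : ℕ) (hj : j < 2 * n) :
    gb n j = coreNum n {diagVertex j, diagVertex (2 * n)} / coreNum n ∅ := by
  rw [gb, Zpm_bvertex_eq_coreNum n (by omega) (by omega), Zpm_eq_coreNum n (by simp)]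

lemma gfn_eq (n i j : ℕ) (hi : i < 2 * n) (hj : j < 2 * n) :
    gfn n i j = coreNum n {diagVertex i, diagVertex j} / coreNum n ∅ := by
  rw [gfn, Zpm_eq_coreNum n (U := ∅) (by simp), Zpm_eq_coreNum n]
  · rfl
  · rintro v (rfl | rfl) <;> exact ⟨rfl, by dsimp only; omega, by dsimp only; omega⟩

end Recurrence

/-- For `n ≥ 1` and `0 ≤ i < j ≤ 2n−1`: if `i = 0` then `g_n(0,j) = 1 − g_n^b(j)`;
if `i = 1` then `g_n(1,j) = (Z_{n−1}/Z_n)·g_{n−1}^b(j−2)`; and if `i ≥ 2` then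
`g_n(i,j) = g_{n−1}(i−2,j−2) − g_n^b(j)·g_{n−1}^b(i−2) + g_n^b(i)·g_{n−1}^b(j−2)`. -/
theorem gfn_recurrence (n : ℕ) (hn : 1 ≤ n) (i j : ℕ) (hij : i < j) (hj : j ≤ 2*n - 1) :
    (i = 0 → gfn n 0 j = 1 - gb n j) ∧
    (i = 1 → gfn n 1 j = (Zpm (n-1) ∅ : ℚ) / (Zpm n ∅ : ℚ) * gb (n-1) (j-2)) ∧
    (2 ≤ i → gfn n i j = gfn (n-1) (i-2) (j-2) - gb n j * gb (n-1) (i-2)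
        + gb n i * gb (n-1) (j-2)) := by
  obtain ⟨m, rfl⟩ : ∃ m, n = m + 1 := ⟨n - 1, by omega⟩
  rw [Nat.add_sub_cancel]
  have hcore : ∀ k, Zpm k ∅ = coreNum k ∅ := fun k => Zpm_eq_coreNum k (by simp)
  have hpos : ∀ k, (coreNum k ∅ : ℚ) ≠ 0 := fun k =>
    Nat.cast_ne_zero.2 (hcore k ▸ Zpm_empty_pos k).ne'
  have hm := hpos m
  have hm' := hpos (m + 1)
  refine ⟨?_, ?_, fun hi => ?_⟩
  · rintro rfl
    have h := coreNum_empty_eq_add (m + 1) (j := j) (by omega) (by omega)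
    rw [gfn_eq _ _ _ (by omega) (by omega), gb_eq _ _ (by omega), eq_sub_iff_add_eq, ← add_div,
      div_eq_one_iff_eq hm']
    exact_mod_cast h.symm
  · rintro rfl
    have h := coreNum_succ_pair m (j := j) (by omega) (by omega)
    rw [gfn_eq _ _ _ (by omega) (by omega), gb_eq _ _ (by omega), hcore, hcore,
      Nat.cast_sub (by omega : 2 ≤ j), Nat.cast_one, h, Nat.cast_ofNat]
    field_simp
  · have hc := coreNum_condensation (m + 1) (i := i) (j := j) (by omega) (by omega) (by omega)
    rw [coreNum_succ_quadruple m (by omega) (by omega) (by omega), coreNum_succ_pair_top,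
      coreNum_succ_pair m (j := j) (by omega) (by omega),
      coreNum_succ_pair m (j := i) (by omega) (by omega)] at hc
    have hc' := congrArg (Nat.cast : ℕ → ℚ) hc
    push_cast at hc'
    rw [gfn_eq _ _ _ (by omega) (by omega), gfn_eq _ _ _ (by omega) (by omega),
      gb_eq _ _ (by omega), gb_eq _ _ (by omega), gb_eq _ _ (by omega), gb_eq _ _ (by omega)]
    rw [Nat.cast_sub hi, Nat.cast_sub (by omega : 2 ≤ j)]
    push_cast
    field_simp
    linarith
end
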